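/- arXiv:1708.00832 — 3 statements merged into one kernel-verified Lean document; each statement's English description precedes it below -/
import Mathlib

section
/- Let T = {1342, 2143, 3412} (patterns of length 4). Then the generating function for T-avoiders satisfies, as formal power series over ℚ, (1-x)^3·(1-3x)·(1-3x+x^2)·F_T(x) = (1-2x)·(1 - 6x + 12x^2 - 9x^3 + 4x^4); that is, F_T(x) = (1-2x)(1-6x+12x^2-9x^3+4x^4)/((1-x)^3(1-3x)(1-3x+x^2)). -/
open PowerSeries

/-- A permutation `π` of `{0,…,n-1}` contains the pattern `σ` (of length `k`) if there is an
order-embedding of positions on which the values of `π` appear in the same relative order as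
the values of `σ`. -/
def ContainsPattern {n k : ℕ} (π : Equiv.Perm (Fin n)) (σ : Fin k → Fin k) : Prop :=
  ∃ f : Fin k ↪o Fin n, ∀ a b : Fin k, σ a < σ b ↔ π (f a) < π (f b)

/-- The number of permutations of length `n` avoiding every pattern in `T`. -/
noncomputable def avoiderCount (T : Set (Fin 4 → Fin 4)) (n : ℕ) : ℕ :=
  Nat.card {π : Equiv.Perm (Fin n) // ∀ σ ∈ T, ¬ ContainsPattern π σ}

/-- The generating function `F_T(x) = ∑_n |S_n(T)| xⁿ` over `ℚ`. -/
noncomputable def avoiderGF (T : Set (Fin 4 → Fin 4)) : PowerSeries ℚ :=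
  PowerSeries.mk fun n => (avoiderCount T n : ℚ)

/-- The generating function of the Catalan numbers over `ℚ`. -/
noncomputable def catalanGF : PowerSeries ℚ :=
  PowerSeries.mk fun n => (catalan n : ℚ)

/-- abstract data of a permutation -/
structure St where
  n : ℕ
  B : ℕ → ℕ → Prop
  f : ℕ → Prop

def us (v x : ℕ) : ℕ := if x < v then x else x - 1
def us' (v x : ℕ) : ℕ := if x ≤ v then x else x - 1

def St.step (S : St) (v : ℕ) : St where
  n := S.n + 1
  B x y := (x ≠ v ∧ x ≤ S.n ∧ y = v) ∨ (x ≠ v ∧ y ≠ v ∧ S.B (us v x) (us v y))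
  f w := S.f (us' v w) ∨ (∃ a b, S.B a b ∧ a < w ∧ w ≤ b ∧ b < v) ∨
    (∃ a b, S.B b a ∧ a < b ∧ b < w ∧ w ≤ v) ∨ (∃ a b, S.B a b ∧ v < w ∧ a < b ∧ w ≤ a + 1)

open Classical in
noncomputable def St.E : ℕ → St → ℕ
  | 0, _ => 1
  | d+1, S => ∑ v ∈ Finset.range (S.n + 1), if S.f v then 0 else (S.step v).E d

structure StF (S : St) (s : ℕ) : Prop where
  h1 : 1 ≤ s
  h2 : s ≤ S.n
  hf : ∀ w ≤ S.n, (S.f w ↔ (1 ≤ w ∧ w < s))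
  ha : ∃ a b, a < b ∧ S.B a b
  hd : ∃ a b, a < b ∧ b < s ∧ S.B b a
  hs : ∀ a b, a < b → S.B a b → a < s

structure StC (S : St) (m s : ℕ) : Prop where
  h1 : 1 ≤ m
  h2 : m < s
  h3 : s ≤ S.n
  hf : ∀ w ≤ S.n, (S.f w ↔ ¬ (w = 0 ∨ w = m ∨ s ≤ w))
  ha : ∃ a b, m ≤ a ∧ a < b ∧ S.B a b
  hs : ∀ a b, a < b → S.B a b → a < s
  hi : ∀ a b, a < b → b < m → ¬ S.B b a
  hc : ∃ a b, a < m ∧ m ≤ b ∧ b < s ∧ S.B a b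
  hd : ∃ a b, a < b ∧ b < s ∧ S.B b a

structure StG (S : St) (s : ℕ) : Prop where
  h1 : 1 ≤ s
  h2 : s + 2 ≤ S.n
  hf : ∀ w ≤ S.n, (S.f w ↔ (1 ≤ w ∧ w < s))
  hb1 : S.B 0 (s+1)
  hb2 : S.B (s+1) s
  hb3 : S.B 0 s
  hi : ∀ a b, a < b → b ≤ s → ¬ S.B b a
  hs : ∀ a b, a < b → S.B a b → a < s

structure StB (S : St) (t : ℕ) : Prop where
  h1 : 2 ≤ t
  h2 : t ≤ S.n
  hf : ∀ w ≤ S.n, (S.f w ↔ (1 ≤ w ∧ w < t - 1))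
  hi : ∀ a b, a < b → b < t → ¬ S.B b a
  hb : S.B 0 (t-1)
  hs : ∀ a b, a < b → S.B a b → b < t
  hl : t < S.n → S.B t 0

structure StA (S : St) : Prop where
  hf : ∀ w ≤ S.n, ¬ S.f w
  hs : ∀ a b, a < b → ¬ S.B a b
  hd : ∀ a b, a < b → b < S.n → S.B b a

/-- bounds -/
def St.Ok (S : St) : Prop := ∀ a b, S.B a b → a < S.n ∧ b < S.n

section
variable {S : St}

theorem Bnew {v a : ℕ} (h : a ≠ v) (h' : a ≤ S.n) : (S.step v).B a v := Or.inl ⟨h, h', rfl⟩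
theorem Blo {v a b : ℕ} (h : S.B a b) (ha : a < v) (hb : b < v) : (S.step v).B a b := by
  right; simp [us, ha, hb, h]; omega
theorem Bhi {v a b : ℕ} (h : S.B a b) (ha : v ≤ a) (hb : v ≤ b) : (S.step v).B (a+1) (b+1) := by
  right; refine ⟨by omega, by omega, ?_⟩
  have h1 : us v (a+1) = a := by grind [us]
  have h2 : us v (b+1) = b := by grind [us]
  rw [h1, h2]; exact h
theorem Bhl {v a b : ℕ} (h : S.B a b) (ha : v ≤ a) (hb : b < v) : (S.step v).B (a+1) b := by
  right; refine ⟨by omega, by omega, ?_⟩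
  have h1 : us v (a+1) = a := by grind [us]
  have h2 : us v (b) = b := by grind [us]
  rw [h1, h2]; exact h
theorem Blh {v a b : ℕ} (h : S.B a b) (ha : a < v) (hb : v ≤ b) : (S.step v).B a (b+1) := by
  right; refine ⟨by omega, by omega, ?_⟩
  have h1 : us v (a) = a := by grind [us]
  have h2 : us v (b+1) = b := by grind [us]
  rw [h1, h2]; exact h
theorem Bgen {v a b : ℕ} (h : S.B a b) : (S.step v).B (if a < v then a else a+1) (if b < v then b else b+1) := by
  split_ifs with h1 h2 h2
  · exact Blo h h1 h2
  · exact Blh h h1 (by omega)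
  · exact Bhl h (by omega) h2
  · exact Bhi h (by omega) (by omega)
/-- inversion for ascents -/
theorem Binv {v a b : ℕ} (h : (S.step v).B a b) : (a ≠ v ∧ a ≤ S.n ∧ b = v) ∨ ∃ a' b', S.B a' b' ∧ a = (if a' < v then a' else a'+1) ∧ b = (if b' < v then b' else b'+1) := by
  rcases h with h | ⟨h1, h2, h3⟩
  · exact Or.inl h
  · right; exact ⟨_, _, h3, by grind [us], by grind [us]⟩
theorem Ok_step {v : ℕ} (hv : v ≤ S.n) (h : S.Ok) : (S.step v).Ok := by
  intro a b hab
  have : (S.step v).n = S.n + 1 := rfl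
  rcases Binv hab with h1 | ⟨a', b', h1, h2, h3⟩
  · grind
  · have := h _ _ h1; grind

theorem fstep (S : St) (v w : ℕ) : (S.step v).f w ↔ (S.f (us' v w) ∨ (∃ a b, S.B a b ∧ a < w ∧ w ≤ b ∧ b < v) ∨
    (∃ a b, S.B b a ∧ a < b ∧ b < w ∧ w ≤ v) ∨ (∃ a b, S.B a b ∧ v < w ∧ a < b ∧ w ≤ a + 1)) := Iff.rfl

theorem F_0 {s} (h : StF S s) : StF (S.step 0) (s+1) := by
  obtain ⟨h1, h2, hf, ⟨a, b, hab, ha⟩, ⟨c, e, hce, hes, hd⟩, hs⟩ := h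
  refine ⟨by omega, by simp [St.step]; omega, ?_, ⟨_, _, ?_, Bgen ha⟩, ⟨_, _, ?_, ?_, Bgen hd⟩, ?_⟩
  · intro w hw
    change w ≤ S.n + 1 at hw
    rw [fstep]
    have := hf (us' 0 w)
    grind [us']
  · grind
  · grind
  · grind
  · intro a b hab h
    rcases Binv h with h1 | ⟨a', b', h1, h2, h3⟩
    · grind
    · have := hs a' b'
      grind

theorem F_s {s v} (h : StF S s) (hv : s ≤ v) (hv' : v ≤ S.n) : StF (S.step v) (v+1) := by
  obtain ⟨h1, h2, hf, ⟨a, b, hab, ha⟩, ⟨c, e, hce, hes, hd⟩, hs⟩ := h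
  refine ⟨by omega, by simp [St.step]; omega, ?_, ⟨_, _, ?_, Bgen ha⟩, ⟨_, _, ?_, ?_, Bgen hd⟩, ?_⟩
  · intro w hw
    change w ≤ S.n + 1 at hw
    rw [fstep]
    have := hf (us' v w)
    grind [us']
  · grind
  · grind
  · grind
  · intro a b hab h
    rcases Binv h with h1 | ⟨a', b', h1, h2, h3⟩
    · grind
    · have := hs a' b'
      grind

theorem C_0 {m s} (h : StC S m s) : StF (S.step 0) (s+1) := by
  obtain ⟨h0, h1, h2, hf, ⟨a, b, hma, hab, ha⟩, hs, hi, ⟨x, y, hx, hy, hys, hc⟩, ⟨c, e, hce, hes, hd⟩⟩ := h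
  refine ⟨by omega, by simp [St.step]; omega, ?_, ⟨_, _, ?_, Bgen ha⟩, ⟨_, _, ?_, ?_, Bgen hd⟩, ?_⟩
  · intro w hw
    change w ≤ S.n + 1 at hw
    rw [fstep]
    have := hf (us' 0 w)
    grind [us']
  · grind
  · grind
  · grind
  · intro a b hab h
    rcases Binv h with h1 | ⟨a', b', h1, h2, h3⟩
    · grind
    · have := hs a' b'
      grind

theorem C_s {m s v} (h : StC S m s) (hv : s ≤ v) (hv' : v ≤ S.n) : StF (S.step v) (v+1) := by
  obtain ⟨h0, h1, h2, hf, ⟨a, b, hma, hab, ha⟩, hs, hi, ⟨x, y, hx, hy, hys, hc⟩, ⟨c, e, hce, hes, hd⟩⟩ := h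
  refine ⟨by omega, by simp [St.step]; omega, ?_, ⟨_, _, ?_, Bgen ha⟩, ⟨_, _, ?_, ?_, Bgen hd⟩, ?_⟩
  · intro w hw
    change w ≤ S.n + 1 at hw
    rw [fstep]
    have := hf (us' v w)
    grind [us']
  · grind
  · grind
  · grind
  · intro a b hab h
    rcases Binv h with h1 | ⟨a', b', h1, h2, h3⟩
    · grind
    · have := hs a' b'
      grind

theorem C_m {m s} (h : StC S m s) : StC (S.step m) m (s+1) := by
  obtain ⟨h0, h1, h2, hf, ⟨a, b, hma, hab, ha⟩, hs, hi, ⟨x, y, hx, hy, hys, hc⟩, ⟨c, e, hce, hes, hd⟩⟩ := h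
  refine ⟨by omega, by omega, by simp [St.step]; omega, ?_, ⟨_, _, ?_, ?_, Bgen ha⟩, ?_, ?_, 
     ⟨_, _, ?_, ?_, ?_, Bgen hc⟩, ⟨_, _, ?_, ?_, Bgen hd⟩⟩
  · intro w hw
    change w ≤ S.n + 1 at hw
    rw [fstep]
    have := hf (us' m w)
    grind [us']
  · grind
  · grind
  · intro a b hab h
    rcases Binv h with h1 | ⟨a', b', h1, h2, h3⟩
    · grind
    · have := hs a' b'
      grind
  · intro a b hab hbm h
    rcases Binv h with h1 | ⟨a', b', h1, h2, h3⟩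
    · grind
    · have := hi b' a'
      grind
  all_goals grind

theorem G_0 {s} (h : StG S s) : StF (S.step 0) (s+1) := by
  obtain ⟨h0, h1, hf, hb1, hb2, hb3, hi, hs⟩ := h
  refine ⟨by omega, by simp [St.step]; omega, ?_, ⟨_, _, ?_, Bgen hb1⟩, ⟨0, 1, ?_, ?_, Bnew (by omega) (by omega)⟩, ?_⟩
  · intro w hw
    change w ≤ S.n + 1 at hw
    rw [fstep]
    have := hf (us' 0 w)
    grind [us']
  · grind
  · grind
  · grind
  · intro a b hab h
    rcases Binv h with h1 | ⟨a', b', h1, h2, h3⟩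
    · grind
    · have := hs a' b'
      grind

theorem G_s {s} (h : StG S s) : StG (S.step s) s := by
  obtain ⟨h0, h1, hf, hb1, hb2, hb3, hi, hs⟩ := h
  refine ⟨by omega, by simp [St.step]; omega, ?_, ?_, Bnew (by omega) (by omega), Bnew (by omega) (by omega), ?_, ?_⟩
  · intro w hw
    change w ≤ S.n + 1 at hw
    rw [fstep]
    have := hf (us' s w)
    grind [us']
  · exact Blh hb3 (by omega) (by omega)
  · intro a b hab hbm h
    rcases Binv h with h1 | ⟨a', b', h1, h2, h3⟩
    · grind
    · have := hi b' a'
      grind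
  · intro a b hab h
    rcases Binv h with h1 | ⟨a', b', h1, h2, h3⟩
    · grind
    · have := hs a' b'
      grind

theorem G_s1 {s} (h : StG S s) : StG (S.step (s+1)) (s+1) := by
  obtain ⟨h0, h1, hf, hb1, hb2, hb3, hi, hs⟩ := h
  refine ⟨by omega, by simp [St.step]; omega, ?_, ?_, Bnew (by omega) (by omega), Bnew (by omega) (by omega), ?_, ?_⟩
  · intro w hw
    change w ≤ S.n + 1 at hw
    rw [fstep]
    have := hf (us' (s+1) w)
    grind [us']
  · exact Blh hb1 (by omega) (by omega)
  · intro a b hab hbm h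
    rcases Binv h with h1 | ⟨a', b', h1, h2, h3⟩
    · grind
    · have := hi b' a'
      grind
  · intro a b hab h
    rcases Binv h with h1 | ⟨a', b', h1, h2, h3⟩
    · grind
    · have := hs a' b'
      grind

theorem G_v {s v} (h : StG S s) (hv : s + 2 ≤ v) (hv' : v ≤ S.n) : StF (S.step v) (v+1) := by
  obtain ⟨h0, h1, hf, hb1, hb2, hb3, hi, hs⟩ := h
  refine ⟨by omega, by simp [St.step]; omega, ?_, ⟨_, _, ?_, Bgen hb1⟩, ⟨_, _, ?_, ?_, Bgen hb2⟩, ?_⟩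
  · intro w hw
    change w ≤ S.n + 1 at hw
    rw [fstep]
    have := hf (us' v w)
    grind [us']
  · grind
  · grind
  · grind
  · intro a b hab h
    rcases Binv h with h1 | ⟨a', b', h1, h2, h3⟩
    · grind
    · have := hs a' b'
      grind

theorem B_0 {t} (h : StB S t) : StF (S.step 0) t := by
  obtain ⟨h0, h1, hf, hi, hb, hs, hl⟩ := h
  refine ⟨by omega, by simp [St.step]; omega, ?_, ⟨_, _, ?_, Bgen hb⟩, ⟨0, 1, ?_, ?_, Bnew (by omega) (by omega)⟩, ?_⟩
  · intro w hw
    change w ≤ S.n + 1 at hw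
    rw [fstep]
    have := hf (us' 0 w)
    grind [us']
  · grind
  · grind
  · grind
  · intro a b hab h
    rcases Binv h with h1 | ⟨a', b', h1, h2, h3⟩
    · grind
    · have := hs a' b'
      grind

theorem B_t1 {t} (h : StB S t) : StG (S.step (t-1)) (t-1) := by
  obtain ⟨h0, h1, hf, hi, hb, hs, hl⟩ := h
  refine ⟨by omega, by simp [St.step]; omega, ?_, ?_, Bnew (by omega) (by omega), Bnew (by omega) (by omega), ?_, ?_⟩
  · intro w hw
    change w ≤ S.n + 1 at hw
    rw [fstep]
    have := hf (us' (t-1) w)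
    grind [us']
  · exact Blh hb (by omega) (by omega)
  · intro a b hab hbm h
    rcases Binv h with h1 | ⟨a', b', h1, h2, h3⟩
    · grind
    · have := hi b' a'
      grind
  · intro a b hab h
    rcases Binv h with h1 | ⟨a', b', h1, h2, h3⟩
    · grind
    · have := hs a' b'
      grind

theorem B_t {t} (h : StB S t) : StB (S.step t) (t+1) := by
  obtain ⟨h0, h1, hf, hi, hb, hs, hl⟩ := h
  refine ⟨by omega, by simp [St.step]; omega, ?_, ?_, Bnew (by omega) (by omega), ?_, ?_⟩
  · intro w hw
    change w ≤ S.n + 1 at hw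
    rw [fstep]
    have := hf (us' (t) w)
    grind [us']
  · intro a b hab hbm h
    rcases Binv h with h1 | ⟨a', b', h1, h2, h3⟩
    · grind
    · have := hi b' a'
      grind
  · intro a b hab h
    rcases Binv h with h1 | ⟨a', b', h1, h2, h3⟩
    · grind
    · have := hs a' b'
      grind
  · intro h
    change t + 1 < S.n + 1 at h
    exact Bhl (hl (by omega)) (by omega) (by omega)

theorem B_v {t v} (h : StB S t) (hv : t + 1 ≤ v) (hv' : v ≤ S.n) : StC (S.step v) t (v+1) := by
  obtain ⟨h0, h1, hf, hi, hb, hs, hl⟩ := h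
  have hl := hl (by omega)
  refine ⟨by omega, by omega, by simp [St.step]; omega, ?_, ⟨t, v, ?_, ?_, Bnew (by omega) (by omega)⟩, ?_, ?_, 
     ⟨0, v, ?_, ?_, ?_, Bnew (by omega) (by omega)⟩, ⟨_, _, ?_, ?_, Bgen hl⟩⟩
  · intro w hw
    change w ≤ S.n + 1 at hw
    rw [fstep]
    have := hf (us' v w)
    grind [us']
  · grind
  · grind
  · intro a b hab h
    rcases Binv h with h1 | ⟨a', b', h1, h2, h3⟩
    · grind
    · have := hs a' b'
      grind
  · intro a b hab hbm h
    rcases Binv h with h1 | ⟨a', b', h1, h2, h3⟩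
    · grind
    · have := hi b' a'
      grind
  all_goals grind

theorem A_0 (h : StA S) : StA (S.step 0) := by
  obtain ⟨hf, hs, hd⟩ := h
  refine ⟨?_, ?_, ?_⟩
  · intro w hw
    change w ≤ S.n + 1 at hw
    rw [fstep]
    have := hf (us' 0 w)
    grind [us']
  · intro a b hab h
    rcases Binv h with h1 | ⟨a', b', h1, h2, h3⟩
    · grind
    · have := hs a' b'
      grind
  · intro a b hab hb
    change b < S.n + 1 at hb
    rcases Nat.eq_zero_or_pos a with rfl | ha
    · exact Bnew (by omega) (by omega)
    · have := Bhi (v := 0) (hd (a-1) (b-1) (by omega) (by omega)) (by omega) (by omega)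
      grind

theorem A_1 (h : StA S) (h1 : 1 ≤ S.n) : StB (S.step 1) 2 := by
  obtain ⟨hf, hs, hd⟩ := h
  refine ⟨by omega, by simp [St.step]; omega, ?_, ?_, Bnew (by omega) (by omega), ?_, ?_⟩
  · intro w hw
    change w ≤ S.n + 1 at hw
    rw [fstep]
    have := hf (us' 1 w)
    grind [us']
  · intro a b hab hbm h
    rcases Binv h with h1 | ⟨a', b', h1, h2, h3⟩
    · grind
    · grind
  · intro a b hab h
    rcases Binv h with h1 | ⟨a', b', h1, h2, h3⟩
    · grind
    · have := hs a' b'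
      grind
  · intro h
    change 2 < S.n + 1 at h
    exact Bhl (hd 0 1 (by omega) (by omega)) (by omega) (by omega)

theorem A_v {v} (h : StA S) (hv : 2 ≤ v) (hv' : v ≤ S.n) : StC (S.step v) 1 (v+1) := by
  obtain ⟨hf, hs, hd⟩ := h
  have hl := hd 0 1 (by omega) (by omega)
  refine ⟨by omega, by omega, by simp [St.step]; omega, ?_, ⟨1, v, ?_, ?_, Bnew (by omega) (by omega)⟩, ?_, ?_, 
     ⟨0, v, ?_, ?_, ?_, Bnew (by omega) (by omega)⟩, ⟨_, _, ?_, ?_, Bgen hl⟩⟩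
  · intro w hw
    change w ≤ S.n + 1 at hw
    rw [fstep]
    have := hf (us' v w)
    grind [us']
  · grind
  · grind
  · intro a b hab h
    rcases Binv h with h1 | ⟨a', b', h1, h2, h3⟩
    · grind
    · have := hs a' b'
      grind
  · intro a b hab hbm h
    omega
  all_goals grind
end

section
open Finset

def cF : ℕ → ℕ → ℕ
  | 0, _ => 1
  | d+1, j => cF d j + ∑ i ∈ range (j+1), cF d i
def cC : ℕ → ℕ → ℕ
  | 0, _ => 1
  | d+1, j => cF d j + cC d j + ∑ i ∈ range (j+1), cF d i
def cG : ℕ → ℕ → ℕ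
  | 0, _ => 1
  | d+1, j => cF d (j+2) + (cG d (j+1) + cG d j + ∑ i ∈ range (j+1), cF d i)
def cB : ℕ → ℕ → ℕ
  | 0, _ => 1
  | d+1, j => cF d (j+1) + (cG d j + cB d j + ∑ i ∈ range j, cC d i)
/-- `cA d j` is for `n = j+1`. -/
def cA : ℕ → ℕ → ℕ
  | 0, _ => 1
  | d+1, j => cA d (j+1) + cB d j + ∑ i ∈ range j, cC d i

theorem E_succ (S : St) (d : ℕ) (g : ℕ → ℕ) (h1 : ∀ v ≤ S.n, S.f v → g v = 0)
    (h2 : ∀ v ≤ S.n, ¬ S.f v → (S.step v).E d = g v) :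
    S.E (d+1) = ∑ v ∈ range (S.n+1), g v := by
  rw [St.E]
  refine sum_congr rfl fun v hv => ?_
  have hv : v ≤ S.n := by simpa [Nat.lt_succ_iff] using hv
  split_ifs with h
  · exact (h1 v hv h).symm
  · exact h2 v hv h

theorem sum_flip' (g : ℕ → ℕ) (j : ℕ) (h : ℕ → ℕ) (hh : ∀ i < j, h i = g (j - 1 - i)) :
    ∑ i ∈ range j, h i = ∑ i ∈ range j, g i := by
  rw [← sum_range_reflect g]
  exact sum_congr rfl fun i hi => hh i (by simpa using hi)

theorem E_F (d : ℕ) : ∀ (S : St) (s : ℕ), StF S s → S.E d = cF d (S.n - s) := by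
  induction d with
  | zero => intros; rfl
  | succ d ih =>
    intro S s h
    have hh := h
    obtain ⟨h1, h2, hf, -, -, -⟩ := hh
    rw [E_succ S d (fun v => if v = 0 then cF d (S.n - s) else if v < s then 0 else cF d (S.n - v))]
    · obtain ⟨j, hj⟩ := Nat.exists_eq_add_of_le h2
      have e1 : S.n + 1 = s + (j + 1) := by omega
      have e2 : S.n - s = j := by omega
      rw [e1, sum_range_add, e2, cF]
      congr 1
      · rw [sum_eq_single 0]
        · simp
        · intro b hb hb0; simp at hb; simp [hb0, hb]
        · simp; omega
      · apply sum_flip'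
        intro i hi
        rw [if_neg (by omega), if_neg (by omega)]
        congr 1; omega
    · intro v hv hfv
      rw [hf v hv] at hfv
      rw [if_neg (by omega), if_pos (by omega)]
    · intro v hv hfv
      rw [hf v hv] at hfv
      by_cases h0 : v = 0
      · subst h0
        rw [ih _ _ (F_0 h), if_pos rfl]
        congr 1
        change S.n + 1 - _ = _; omega
      · rw [ih _ _ (F_s h (v := v) (by omega) hv), if_neg h0, if_neg (by omega)]
        congr 1
        change S.n + 1 - _ = _; omega

theorem E_C (d : ℕ) : ∀ (S : St) (m s : ℕ), StC S m s → S.E d = cC d (S.n - s) := by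
  induction d with
  | zero => intros; rfl
  | succ d ih =>
    intro S m s h
    have hh := h
    obtain ⟨h0, h1, h2, hf, -, -, -⟩ := hh
    rw [E_succ S d (fun v => if v = 0 then cF d (S.n - s) else if v = m then cC d (S.n - s) else
      if v < s then 0 else cF d (S.n - v))]
    · obtain ⟨j, hj⟩ := Nat.exists_eq_add_of_le h2
      have e1 : S.n + 1 = s + (j + 1) := by omega
      have e2 : S.n - s = j := by omega
      rw [e1, sum_range_add, e2, cC]
      congr 1
      · have e3 : ∀ v ∈ range s, (if v = 0 then cF d j else if v = m then cC d j else
           if v < s then 0 else cF d (S.n - v)) = (if v = 0 then cF d j else 0) + (if v = m then cC d j else 0) := by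
          intro v hv; simp at hv; grind
        rw [sum_congr rfl e3, sum_add_distrib]
        simp [h1]; omega
      · apply sum_flip'
        intro i hi
        rw [if_neg (by omega), if_neg (by omega), if_neg (by omega)]
        congr 1; omega
    · intro v hv hfv
      rw [hf v hv] at hfv
      rw [if_neg (by omega), if_neg (by omega), if_pos (by omega)]
    · intro v hv hfv
      rw [hf v hv] at hfv
      by_cases h0 : v = 0
      · subst h0
        rw [E_F _ _ _ (C_0 h), if_pos rfl]
        congr 1
        change S.n + 1 - _ = _; omega
      by_cases h0 : v = m
      · subst h0
        rw [ih _ _ _ (C_m h), if_neg (by omega), if_pos rfl]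
        congr 1
        change S.n + 1 - _ = _; omega
      · rw [E_F _ _ _ (C_s h (v := v) (by omega) hv), if_neg (by omega), if_neg h0, if_neg (by omega)]
        congr 1
        change S.n + 1 - _ = _; omega

theorem E_G (d : ℕ) : ∀ (S : St) (s : ℕ), StG S s → S.E d = cG d (S.n - s - 2) := by
  induction d with
  | zero => intros; rfl
  | succ d ih =>
    intro S s h
    have hh := h
    obtain ⟨h1, h2, hf, -, -, -⟩ := hh
    rw [E_succ S d (fun v => if v = 0 then cF d (S.n - s) else if v < s then 0 else
      if v = s then cG d (S.n - s - 1) else if v = s+1 then cG d (S.n - s - 2) else cF d (S.n - v))]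
    · obtain ⟨j, hj⟩ := Nat.exists_eq_add_of_le h2
      have e1 : S.n + 1 = s + (2 + (j + 1)) := by omega
      have e2 : S.n - s = j+2 := by omega
      rw [e1, sum_range_add, sum_range_add, e2, cG]
      congr 1
      · rw [sum_eq_single 0]
        · simp
        · intro b hb hb0; simp at hb; simp [hb0, hb]
        · simp; omega
      congr 1
      · simp [sum_range_succ]; grind
      · apply sum_flip'
        intro i hi
        rw [if_neg (by omega), if_neg (by omega), if_neg (by omega), if_neg (by omega)]
        congr 1; omega
    · intro v hv hfv
      rw [hf v hv] at hfv
      rw [if_neg (by omega), if_pos (by omega)]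
    · intro v hv hfv
      rw [hf v hv] at hfv
      by_cases h0 : v = 0
      · subst h0
        rw [E_F _ _ _ (G_0 h), if_pos rfl]
        congr 1
        change S.n + 1 - _ = _; omega
      rw [if_neg h0, if_neg (by omega)]
      by_cases h0 : v = s
      · subst h0
        rw [ih _ _ (G_s h), if_pos rfl]
        congr 1
        change S.n + 1 - _ - _ = _; omega
      rw [if_neg h0]
      by_cases h0 : v = s + 1
      · subst h0
        rw [ih _ _ (G_s1 h), if_pos rfl]
        congr 1
        change S.n + 1 - _ - _ = _; omega
      · rw [E_F _ _ _ (G_v h (v := v) (by omega) hv), if_neg h0]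
        congr 1
        change S.n + 1 - _ = _; omega

theorem E_B (d : ℕ) : ∀ (S : St) (t : ℕ), StB S t → S.E d = cB d (S.n - t) := by
  induction d with
  | zero => intros; rfl
  | succ d ih =>
    intro S t h
    have hh := h
    obtain ⟨h1, h2, hf, -, -, -⟩ := hh
    rw [E_succ S d (fun v => if v = 0 then cF d (S.n - t + 1) else if v < t - 1 then 0 else
      if v = t - 1 then cG d (S.n - t) else if v = t then cB d (S.n - t) else cC d (S.n - v))]
    · obtain ⟨j, hj⟩ := Nat.exists_eq_add_of_le h2
      have e1 : S.n + 1 = (t-1) + (2 + j) := by omega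
      have e2 : S.n - t = j := by omega
      rw [e1, sum_range_add, sum_range_add, e2, cB]
      congr 1
      · rw [sum_eq_single 0]
        · simp
        · intro b hb hb0; simp at hb; grind
        · simp; omega
      congr 1
      · simp [sum_range_succ]; grind
      · apply sum_flip'
        intro i hi
        rw [if_neg (by omega), if_neg (by omega), if_neg (by omega), if_neg (by omega)]
        congr 1; omega
    · intro v hv hfv
      rw [hf v hv] at hfv
      rw [if_neg (by omega), if_pos (by omega)]
    · intro v hv hfv
      rw [hf v hv] at hfv
      by_cases h0 : v = 0
      · subst h0
        rw [E_F _ _ _ (B_0 h), if_pos rfl]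
        congr 1
        change S.n + 1 - _ = _; omega
      rw [if_neg h0, if_neg (by omega)]
      by_cases h0 : v = t - 1
      · subst h0
        rw [E_G _ _ _ (B_t1 h), if_pos rfl]
        congr 1
        change S.n + 1 - _ - _ = _; omega
      rw [if_neg h0]
      by_cases h0 : v = t
      · subst h0
        rw [ih _ _ (B_t h), if_pos rfl]
        congr 1
        change S.n + 1 - _ = _; omega
      · rw [E_C _ _ _ _ (B_v h (v := v) (by omega) hv), if_neg h0]
        congr 1
        change S.n + 1 - _ = _; omega

theorem E_A (d : ℕ) : ∀ (S : St) , StA S → 1 ≤ S.n → S.E d = cA d (S.n - 1) := by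
  induction d with
  | zero => intros; rfl
  | succ d ih =>
    intro S h h1
    rw [E_succ S d (fun v => if v = 0 then cA d (S.n) else 
      if v = 1 then cB d (S.n - 1) else cC d (S.n - v))]
    · obtain ⟨j, hj⟩ := Nat.exists_eq_add_of_le h1
      have e1 : S.n + 1 = 2 + j := by omega
      have e2 : S.n = j + 1 := by omega
      rw [e1, sum_range_add, e2, Nat.add_sub_cancel, cA]
      congr 1
      apply sum_flip'
      intro i hi
      rw [if_neg (by omega), if_neg (by omega)]
      congr 1; omega
    · intro v hv hfv
      exact absurd hfv (h.hf v hv)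
    · intro v hv hfv
      by_cases h0 : v = 0
      · subst h0
        rw [ih _ (A_0 h) (by change 1 ≤ S.n + 1; omega), if_pos rfl]
        congr 1
      rw [if_neg h0]
      by_cases h0 : v = 1
      · subst h0
        rw [E_B _ _ _ (A_1 h h1), if_pos rfl]
        congr 1
      · rw [E_C _ _ _ _ (A_v h (v := v) (by omega) hv), if_neg h0]
        congr 1
        change S.n + 1 - _ = _; omega

theorem E_A0 (d : ℕ) (S : St) (h : StA S) (h0 : S.n = 0) : S.E (d+1) = cA d 0 := by
  have e : (S.step 0).n = 1 := by change S.n + 1 = 1; omega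
  have := E_A d _ (A_0 h) (by omega)
  rw [e] at this
  rw [St.E, h0]
  simp [h.hf 0 (by omega), this]
end

section
open Finset

def Q4 (a b c d : ℕ) : Prop := (a < d ∧ d < b ∧ b < c) ∨ (b < a ∧ a < d ∧ d < c) ∨ (c < d ∧ d < a ∧ a < b)
def Q3 (a b c w : ℕ) : Prop := (a < w ∧ w ≤ b ∧ b < c) ∨ (b < a ∧ a < w ∧ w ≤ c) ∨ (c < w ∧ w ≤ a ∧ a < b)

def Bad {n : ℕ} (π : Equiv.Perm (Fin n)) : Prop :=
  ∃ i j k l : Fin n, i < j ∧ j < k ∧ k < l ∧ Q4 (π i) (π j) (π k) (π l)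

def toSt {n : ℕ} (π : Equiv.Perm (Fin n)) : St where
  n := n
  B a b := ∃ i j : Fin n, i < j ∧ (π i : ℕ) = a ∧ (π j : ℕ) = b
  f w := ∃ i j k : Fin n, i < j ∧ j < k ∧ Q3 (π i) (π j) (π k) w

def insP {n : ℕ} (v : Fin (n+1)) (π : Equiv.Perm (Fin n)) : Equiv.Perm (Fin (n+1)) :=
  ((finSuccEquiv' (Fin.last n)).trans (Equiv.optionCongr π)).trans (finSuccEquiv' v).symm

theorem insP_last {n : ℕ} (v : Fin (n+1)) (π : Equiv.Perm (Fin n)) : insP v π (Fin.last n) = v := by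
  simp [insP]
theorem insP_cast {n : ℕ} (v : Fin (n+1)) (π : Equiv.Perm (Fin n)) (i : Fin n) :
    insP v π i.castSucc = v.succAbove (π i) := by
  rw [← Fin.succAbove_last]
  simp only [insP, Equiv.trans_apply, finSuccEquiv'_succAbove]
  simp

theorem insP_bij (n : ℕ) : Function.Bijective (fun p : Equiv.Perm (Fin n) × Fin (n+1) => insP p.2 p.1) := by
  rw [Fintype.bijective_iff_injective_and_card]
  constructor
  · rintro ⟨π, v⟩ ⟨π', v'⟩ h
    simp only at h
    have hv : v = v' := by rw [← insP_last v π, h, insP_last]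
    subst hv
    simp only [Prod.mk.injEq, and_true]
    ext i
    have : insP v π i.castSucc = insP v π' i.castSucc := by rw [h]
    rw [insP_cast, insP_cast] at this
    rw [Fin.succAbove_right_injective this]
  · simp [Fintype.card_perm, Nat.factorial_succ, mul_comm]

theorem succAbove_val {n : ℕ} (v : Fin (n+1)) (i : Fin n) :
    ((v.succAbove i : Fin (n+1)) : ℕ) = if (i : ℕ) < v then (i : ℕ) else i + 1 := by
  simp only [Fin.succAbove, Fin.lt_def]
  split_ifs <;> simp_all

theorem ex_last {n : ℕ} (P : Fin (n+1) → Prop) : (∃ i, P i) ↔ (∃ i : Fin n, P i.castSucc) ∨ P (Fin.last n) := by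
  constructor
  · rintro ⟨i, hi⟩
    induction i using Fin.lastCases with
    | last => exact Or.inr hi
    | cast i => exact Or.inl ⟨i, hi⟩
  · rintro (⟨i, hi⟩ | h)
    · exact ⟨_, hi⟩
    · exact ⟨_, h⟩

theorem nl {n : ℕ} (i : Fin (n+1)) : ¬ (Fin.last n < i) := by simp [Fin.le_last]

theorem Bad_ins {n : ℕ} (v : Fin (n+1)) (π : Equiv.Perm (Fin n)) :
    Bad (insP v π) ↔ Bad π ∨ (toSt π).f v := by
  simp only [Bad, toSt, ex_last, insP_last, insP_cast, nl, Fin.castSucc_lt_castSucc_iff, Fin.castSucc_lt_last,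
    succAbove_val, false_and, and_false, exists_false, or_false, true_and]
  have h4 : ∀ a b c d : ℕ, Q4 (if a < v then a else a+1) (if b < v then b else b+1) (if c < v then c else c+1) (if d < v then d else d+1) ↔ Q4 a b c d := by
    intro a b c d; unfold Q4; grind
  have h3 : ∀ a b c : ℕ, Q4 (if a < v then a else a+1) (if b < v then b else b+1) (if c < v then c else c+1) v ↔ Q3 a b c v := by
    intro a b c; unfold Q4 Q3; grind
  simp only [h4, h3, exists_or]

theorem toSt_ins {n : ℕ} (v : Fin (n+1)) (π : Equiv.Perm (Fin n)) :
    toSt (insP v π) = (toSt π).step v := by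
  have hB : (toSt (insP v π)).B = ((toSt π).step v).B := by
    funext x y
    apply propext
    simp only [toSt, St.step, ex_last, insP_last, insP_cast, nl, Fin.castSucc_lt_castSucc_iff, Fin.castSucc_lt_last,
      succAbove_val, false_and, exists_false, or_false, true_and, exists_or]
    rw [or_comm]
    apply or_congr
    · constructor
      · rintro ⟨i, h1, h2⟩
        have := (π i).isLt
        grind
      · rintro ⟨h1, h2, h3⟩
        have hv := v.isLt
        refine ⟨π.symm ⟨us v x, by grind [us]⟩, ?_, h3.symm⟩
        simp only [Equiv.apply_symm_apply]
        grind [us]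
    · constructor
      · rintro ⟨i, j, h1, h2, h3⟩
        exact ⟨by grind, by grind, i, j, h1, by grind [us], by grind [us]⟩
      · rintro ⟨h1, h2, i, j, h3, h4, h5⟩
        exact ⟨i, j, h3, by grind [us], by grind [us]⟩
  have hf : (toSt (insP v π)).f = ((toSt π).step v).f := by
    funext w
    apply propext
    have h3 : ∀ a b c : ℕ, Q3 (if a < v then a else a+1) (if b < v then b else b+1) (if c < v then c else c+1) w ↔ Q3 a b c (us' v w) := by
      intro a b c; unfold Q3 us'; grind
    have h2 : ∀ a b : ℕ, Q3 (if a < v then a else a+1) (if b < v then b else b+1) v w ↔ 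
        ((a < w ∧ w ≤ b ∧ b < v) ∨ (b < a ∧ a < w ∧ w ≤ v) ∨ (v < w ∧ a < b ∧ w ≤ a + 1)) := by
      intro a b; unfold Q3; grind
    simp only [toSt, St.step, ex_last, insP_last, insP_cast, nl, Fin.castSucc_lt_castSucc_iff, Fin.castSucc_lt_last,
      succAbove_val, false_and, and_false, exists_false, or_false, true_and, exists_or, h3, h2]
    apply or_congr Iff.rfl
    constructor
    · rintro ⟨i, j, hij, h | h | h⟩
      · exact Or.inl ⟨_, _, ⟨i, j, hij, rfl, rfl⟩, h⟩
      · exact Or.inr (Or.inl ⟨_, _, ⟨i, j, hij, rfl, rfl⟩, h⟩)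
      · exact Or.inr (Or.inr ⟨_, _, ⟨i, j, hij, rfl, rfl⟩, h⟩)
    · rintro (⟨_, _, ⟨i, j, hij, rfl, rfl⟩, h⟩ | ⟨_, _, ⟨i, j, hij, rfl, rfl⟩, h⟩ | ⟨_, _, ⟨i, j, hij, rfl, rfl⟩, h⟩)
      · exact ⟨i, j, hij, Or.inl h⟩
      · exact ⟨i, j, hij, Or.inr (Or.inl h)⟩
      · exact ⟨i, j, hij, Or.inr (Or.inr h)⟩
  calc toSt (insP v π) = ⟨n+1, (toSt (insP v π)).B, (toSt (insP v π)).f⟩ := rfl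
    _ = _ := by rw [hB, hf]; rfl

open Classical in
theorem sum_E (d : ℕ) : ∀ n m : ℕ, n + d = m →
    ∑ π : Equiv.Perm (Fin n), (if Bad π then 0 else (toSt π).E d) =
      Nat.card {π : Equiv.Perm (Fin m) // ¬ Bad π} := by
  induction d with
  | zero =>
    rintro n m rfl
    simp only [St.E, Nat.add_zero, Nat.card_eq_fintype_card, Fintype.card_subtype]
    rw [card_filter]
    exact sum_congr rfl fun x _ => by split_ifs <;> simp_all
  | succ d ih =>
    intro n m h
    rw [← ih (n+1) m (by omega), ← (Equiv.ofBijective _ (insP_bij n)).sum_comp, Fintype.sum_prod_type]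
    refine sum_congr rfl fun π _ => ?_
    simp only [Equiv.ofBijective_apply, Bad_ins, toSt_ins]
    by_cases hb : Bad π
    · simp [hb]
    · simp only [hb, false_or, if_false]
      rw [St.E]
      exact (Fin.sum_univ_eq_sum_range (fun v => if (toSt π).f v then 0 else ((toSt π).step v).E d) (n+1)).symm

theorem cont_iff {n : ℕ} (π : Equiv.Perm (Fin n)) (σ : Fin 4 → Fin 4) :
    ContainsPattern π σ ↔ ∃ i j k l : Fin n, i < j ∧ j < k ∧ k < l ∧
      ∀ a b : Fin 4, σ a < σ b ↔ π (![i,j,k,l] a) < π (![i,j,k,l] b) := by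
  constructor
  · rintro ⟨f, hf⟩
    refine ⟨f 0, f 1, f 2, f 3, by simp, by simp, by simp, ?_⟩
    have : ![f 0, f 1, f 2, f 3] = f := by
      funext x; fin_cases x <;> rfl
    rw [this]; exact hf
  · rintro ⟨i, j, k, l, h1, h2, h3, h⟩
    have hm : StrictMono ![i, j, k, l] := by
      rw [Fin.strictMono_iff_lt_succ]
      intro x; fin_cases x
      · exact h1
      · exact h2
      · exact h3
    exact ⟨OrderEmbedding.ofStrictMono _ hm, h⟩

theorem avoid_iff {n : ℕ} (π : Equiv.Perm (Fin n)) :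
    (∀ σ ∈ ({![0,2,3,1], ![1,0,3,2], ![2,3,0,1]} : Set (Fin 4 → Fin 4)), ¬ ContainsPattern π σ) ↔ ¬ Bad π := by
  simp only [Set.mem_insert_iff, Set.mem_singleton_iff, forall_eq_or_imp, forall_eq, cont_iff, Bad, ← not_or, ← exists_or,
    ← and_or_left]
  apply not_congr
  refine exists_congr fun i => exists_congr fun j => exists_congr fun k => exists_congr fun l =>
    and_congr_right fun h1 => and_congr_right fun h2 => and_congr_right fun h3 => ?_
  simp [Fin.forall_fin_succ, Q4]
  omega

theorem avoiderCount_eq (n : ℕ) : avoiderCount ({![0,2,3,1], ![1,0,3,2], ![2,3,0,1]} : Set (Fin 4 → Fin 4)) n =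
    match n with
    | 0 => 1
    | d+1 => cA d 0 := by
  have h1 : avoiderCount ({![0,2,3,1], ![1,0,3,2], ![2,3,0,1]} : Set (Fin 4 → Fin 4)) n = 
    Nat.card {π : Equiv.Perm (Fin n) // ¬ Bad π} := by
    unfold avoiderCount
    simp only [avoid_iff]
  have hA : ∀ π : Equiv.Perm (Fin 0), StA (toSt π) := by
    intro π
    refine ⟨?_, ?_, ?_⟩
    · rintro w - ⟨i, _⟩; exact i.elim0
    · rintro a b - ⟨i, _⟩; exact i.elim0
    · intro a b _ h; exact absurd h (by simp [toSt])
  have hb : ∀ π : Equiv.Perm (Fin 0), ¬ Bad π := by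
    rintro π ⟨i, _⟩; exact i.elim0
  rw [h1, ← sum_E n 0 n (by omega)]
  cases n with
  | zero => simp [hb, St.E]
  | succ d => simp [hb, E_A0 d _ (hA _) rfl]
end

section
open Finset

noncomputable def gfc (c : ℕ → ℕ → ℕ) (j : ℕ) : PowerSeries ℚ := PowerSeries.mk fun d => (c d j : ℚ)

theorem gF (j : ℕ) : gfc cF j = 1 + X * (gfc cF j + ∑ i ∈ range (j+1), gfc cF i) := by
  ext d
  cases d with
  | zero => simp [gfc, cF]
  | succ d => simp [gfc, cF, coeff_succ_X_mul, coeff_one]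
theorem gC (j : ℕ) : gfc cC j = 1 + X * (gfc cF j + gfc cC j + ∑ i ∈ range (j+1), gfc cF i) := by
  ext d
  cases d with
  | zero => simp [gfc, cC]
  | succ d => simp [gfc, cC, coeff_succ_X_mul, coeff_one]
theorem gG (j : ℕ) : gfc cG j = 1 + X * (gfc cF (j+2) + (gfc cG (j+1) + gfc cG j + ∑ i ∈ range (j+1), gfc cF i)) := by
  ext d
  cases d with
  | zero => simp [gfc, cG]
  | succ d => simp [gfc, cG, coeff_succ_X_mul, coeff_one]
theorem gB (j : ℕ) : gfc cB j = 1 + X * (gfc cF (j+1) + (gfc cG j + gfc cB j + ∑ i ∈ range j, gfc cC i)) := by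
  ext d
  cases d with
  | zero => simp [gfc, cB]
  | succ d => simp [gfc, cB, coeff_succ_X_mul, coeff_one]
theorem gA (j : ℕ) : gfc cA j = 1 + X * (gfc cA (j+1) + gfc cB j + ∑ i ∈ range j, gfc cC i) := by
  ext d
  cases d with
  | zero => simp [gfc, cA]
  | succ d => simp [gfc, cA, coeff_succ_X_mul, coeff_one]

theorem ne_of_cc {p : PowerSeries ℚ} (h : constantCoeff p = 1) : p ≠ 0 := by
  rintro rfl; simp at h

theorem uniq (H : ℕ → PowerSeries ℚ) (w : PowerSeries ℚ) (h : ∀ j, H j = X * w * H (j+1)) (j : ℕ) : H j = 0 := by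
  have : ∀ m j, (X : PowerSeries ℚ)^m ∣ H j := by
    intro m
    induction m with
    | zero => intro j; simp
    | succ m ih =>
      intro j
      obtain ⟨q, hq⟩ := ih (j+1)
      rw [h j, hq]
      exact ⟨w * q, by ring⟩
  ext n
  exact (X_pow_dvd_iff.mp (this (n+1) j)) n (by omega)

theorem n1 : (1 - X : PowerSeries ℚ) ≠ 0 := ne_of_cc (by simp)
theorem n2 : (1 - 2*X : PowerSeries ℚ) ≠ 0 := ne_of_cc (by simp)
theorem n3 : (1 - 3*X : PowerSeries ℚ) ≠ 0 := ne_of_cc (by simp)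

theorem F0 : (1 - 2*X) * gfc cF 0 = 1 := by
  have := gF 0
  simp only [zero_add, sum_range_one] at this
  linear_combination this
theorem FS (j : ℕ) : (1 - 2*X) * gfc cF (j+1) = (1 - X) * gfc cF j := by
  have h1 := gF j
  have h2 := gF (j+1)
  rw [sum_range_succ] at h2
  linear_combination h2 - h1
theorem sF (j : ℕ) : X * ∑ i ∈ range j, gfc cF i = (1 - 2 * X) * gfc cF j - 1 := by
  have h1 := gF j
  rw [sum_range_succ] at h1
  linear_combination -h1
theorem CF (j : ℕ) : (1 - X) * gfc cC j = gfc cF j := by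
  have h1 := gC j
  have h2 := gF j
  linear_combination h1 - h2
theorem sC (j : ℕ) : (1 - X) * (X * ∑ i ∈ range j, gfc cC i) = (1 - 2 * X) * gfc cF j - 1 := by
  rw [← sF, mul_left_comm, mul_sum]
  simp only [CF]

theorem w1 : ∃ w : PowerSeries ℚ, w * (1 - X) = 1 := by
  have : IsUnit (1 - X : PowerSeries ℚ) := by rw [PowerSeries.isUnit_iff_constantCoeff]; simp
  exact this.exists_left_inv

theorem GF (j : ℕ) : (1 - 3*X) * (1 - 2*X) * gfc cG j = (1 - 3*X + 3*X^2) * gfc cF j := by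
  obtain ⟨w, hw⟩ := w1
  rw [← sub_eq_zero]
  refine uniq (fun j => (1 - 3*X) * (1 - 2*X) * gfc cG j - (1 - 3*X + 3*X^2) * gfc cF j) w ?_ j
  intro j
  apply mul_left_cancel₀ n1
  apply mul_left_cancel₀ n2
  have h1 := gG j
  have h2 := gF j
  have h3 := FS j
  have h4 := FS (j+1)
  have key : (1 - 2*X) * ((1 - X) * ((1 - 3*X) * (1 - 2*X) * gfc cG j - (1 - 3*X + 3*X^2) * gfc cF j)) = 
    (1 - 2*X) * (X * ((1 - 3*X) * (1 - 2*X) * gfc cG (j+1) - (1 - 3*X + 3*X^2) * gfc cF (j+1))) := by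
    linear_combination (1-2*X)^2*(1-3*X) * (h1 - h2) + (1-3*X)*(1-2*X)*X*h4 + ((1-3*X)*(1-X)*X + X*(1-3*X+3*X^2)) * h3
  linear_combination key - (1 - 2*X) * (X * ((1 - 3*X) * (1 - 2*X) * gfc cG (j+1) - (1 - 3*X + 3*X^2) * gfc cF (j+1))) * hw

theorem BF (j : ℕ) : (1 - X)^2 * (1 - 3*X) * gfc cB j = -X*(1-3*X) + (1 - 3*X + X^2 + 3*X^3) * gfc cF j := by
  apply mul_left_cancel₀ n2
  have h1 := gB j
  have h2 := FS j
  have h3 := GF j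
  have h4 := sC j
  linear_combination (1-X)*(1-3*X)*(1-2*X) * h1 + X*(1-X)*(1-3*X)*h2 + X*(1-X)*h3 + (1-3*X)*(1-2*X)*h4

theorem AF (j : ℕ) : (1 - X)^3 * (1 - 3*X) * (1 - 3*X + X^2) * gfc cA j = 
    -X*(1-3*X)*(1-3*X+X^2) + (1-X)*(1-2*X)*(1-5*X+8*X^2-5*X^3+3*X^4) * gfc cF j := by
  rw [← sub_eq_zero]
  refine uniq (fun j => (1 - X)^3 * (1 - 3*X) * (1 - 3*X + X^2) * gfc cA j - (-X*(1-3*X)*(1-3*X+X^2) + (1-X)*(1-2*X)*(1-5*X+8*X^2-5*X^3+3*X^4) * gfc cF j)) 1 ?_ j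
  intro j
  have h1 := gA j
  have h2 := FS j
  have h3 := BF j
  have h4 := sC j
  linear_combination (1 - X)^3 * (1 - 3*X) * (1 - 3*X + X^2) * h1 + X*(1-X)*(1-3*X+X^2)*h3 + (1-X)^2*(1-3*X)*(1-3*X+X^2)*h4
    + X*(1-X)*(1-5*X+8*X^2-5*X^3+3*X^4) *h2

end

theorem statement_3 :
    ((1 : PowerSeries ℚ) - X)^3 * (1 - 3*X) * (1 - 3*X + X^2) * avoiderGF ({![0,2,3,1], ![1,0,3,2], ![2,3,0,1]} : Set (Fin 4 → Fin 4)) =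
      (1 - 2*X) * (1 - 6*X + 12*X^2 - 9*X^3 + 4*X^4) := by
  have h : avoiderGF ({![0,2,3,1], ![1,0,3,2], ![2,3,0,1]} : Set (Fin 4 → Fin 4)) = 1 + X * gfc cA 0 := by
    ext d
    cases d with
    | zero => simp [avoiderGF, avoiderCount_eq]
    | succ d => simp [avoiderGF, avoiderCount_eq, gfc, coeff_succ_X_mul, coeff_one]
  rw [h]
  have h1 := AF 0
  have h2 := F0
  linear_combination X * h1 + X*(1-X)*(1-5*X+8*X^2-5*X^3+3*X^4) * h2
end

section
/- Let T = {1423, 1234, 3412} (patterns of length 4). Then the generating function for T-avoiders satisfies, as formal power series over ℚ, (1-x)^7·(1-2x)^3·F_T(x) = 1 - 12x + 64x^2 - 198x^3 + 393x^4 - 521x^5 + 463x^6 - 269x^7 + 95x^8 - 17x^9; that is, F_T(x) = (1-12x+64x^2-198x^3+393x^4-521x^5+463x^6-269x^7+95x^8-17x^9)/((1-x)^7(1-2x)^3). -/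
open PowerSeries

namespace S4

section

open Finset


structure Cfg where
  n : ℕ
  K : ℕ → Prop
  A : ℕ → ℕ → Prop

def sh (v a : ℕ) : ℕ := if a < v then a else a + 1
def pr (v s : ℕ) : ℕ := if s ≤ v then s else s - 1

def Cfg.step (c : Cfg) (v : ℕ) : Cfg :=
  ⟨c.n + 1,
   fun s => c.K (pr v s) ∨ ∃ a b, c.A a b ∧
     ((v ≤ a ∧ s ≤ v) ∨ (b < v ∧ (s ≤ a ∨ (b < s ∧ s ≤ v)))),
   fun a b => (a = v ∧ v < b ∧ b ≤ c.n) ∨ ∃ a' b', c.A a' b' ∧ a = sh v a' ∧ b = sh v b'⟩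

open Classical in
noncomputable def Cfg.act (c : Cfg) : Finset ℕ := (Finset.range (c.n + 1)).filter (fun s => ¬ c.K s)

noncomputable def Cfg.cnt : ℕ → Cfg → ℕ
  | 0, _ => 1
  | m + 1, c => ∑ v ∈ c.act, Cfg.cnt m (c.step v)

def Cfg.WF (c : Cfg) : Prop := ∀ a b, c.A a b → a < b ∧ b < c.n

lemma Cfg.WF.step {c : Cfg} (h : c.WF) {v : ℕ} (hv : v ≤ c.n) : (c.step v).WF := by
  rintro a b (⟨rfl, h1, h2⟩ | ⟨a', b', hab, rfl, rfl⟩)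
  · exact ⟨h1, by simp [Cfg.step]; omega⟩
  · have := h _ _ hab
    simp only [Cfg.step, sh]
    constructor <;> split_ifs <;> omega

lemma Cfg.act_le {c : Cfg} {s : ℕ} (h : s ∈ c.act) : s ≤ c.n := by
  simp [Cfg.act] at h; omega

lemma Cfg.act_up {c : Cfg} (h : c.WF) {v t : ℕ} (hvt : v ≤ t) :
    t + 1 ∈ (c.step v).act ↔ t ∈ c.act := by
  simp only [Cfg.act, Finset.mem_filter, Finset.mem_range]
  simp only [Cfg.step]
  have e : pr v (t+1) = t := by simp [pr]; omega
  rw [e]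
  constructor
  · rintro ⟨h1, h2⟩
    exact ⟨by omega, fun hk => h2 (Or.inl hk)⟩
  · rintro ⟨h1, h2⟩
    refine ⟨by omega, ?_⟩
    rintro (hk | ⟨a, b, hab, h3⟩)
    · exact h2 hk
    · have := h _ _ hab
      omega

lemma Cfg.act_low {c : Cfg} {v s : ℕ} (hv : v ≤ c.n) (hs : s ≤ v) :
    s ∈ (c.step v).act ↔ s ∈ c.act ∧ ∀ a b, c.A a b → a < v ∧ (b < v → a < s ∧ s ≤ b) := by
  simp only [Cfg.act, Finset.mem_filter, Finset.mem_range]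
  simp only [Cfg.step]
  have e : pr v s = s := by simp [pr]; omega
  rw [e]
  constructor
  · rintro ⟨h1, h2⟩
    refine ⟨⟨by omega, fun hk => h2 (Or.inl hk)⟩, fun a b hab => ?_⟩
    have : ¬ ((v ≤ a ∧ s ≤ v) ∨ (b < v ∧ (s ≤ a ∨ (b < s ∧ s ≤ v)))) :=
      fun h => h2 (Or.inr ⟨a, b, hab, h⟩)
    omega
  · rintro ⟨⟨h1, h2⟩, h3⟩
    refine ⟨by omega, ?_⟩
    rintro (hk | ⟨a, b, hab, h4⟩)
    · exact h2 hk
    · have := h3 _ _ hab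
      omega

lemma Cfg.card_up {c : Cfg} (h : c.WF) (v : ℕ) (p q : ℕ → Prop) [DecidablePred p] [DecidablePred q]
    (hq : ∀ s, q s → v < s) (hp : ∀ s, p s → v ≤ s) (hpq : ∀ t, v ≤ t → (q (t+1) ↔ p t)) :
    #((c.step v).act.filter q) = #(c.act.filter p) := by
  symm
  apply Finset.card_bij (fun t _ => t + 1)
  · intro t ht
    simp only [Finset.mem_filter] at ht ⊢
    have := hp _ ht.2
    exact ⟨(Cfg.act_up h this).2 ht.1, (hpq _ this).2 ht.2⟩
  · intro a _ b _ hab; omega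
  · intro s hs
    simp only [Finset.mem_filter] at hs
    have h1 := hq _ hs.2
    obtain ⟨t, rfl⟩ : ∃ t, s = t + 1 := ⟨s - 1, by omega⟩
    refine ⟨t, ?_, rfl⟩
    simp only [Finset.mem_filter]
    exact ⟨(Cfg.act_up h (by omega)).1 hs.1, (hpq _ (by omega)).1 hs.2⟩

lemma Cfg.A_new {c : Cfg} {v b : ℕ} (h1 : v < b) (h2 : b ≤ c.n) : (c.step v).A v b :=
  Or.inl ⟨rfl, h1, h2⟩

lemma Cfg.A_old {c : Cfg} {v a b : ℕ} (h : c.A a b) : (c.step v).A (sh v a) (sh v b) :=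
  Or.inr ⟨a, b, h, rfl, rfl⟩

lemma Cfg.A_elim {c : Cfg} {v a b : ℕ} (h : (c.step v).A a b) :
    (a = v ∧ v < b) ∨ ∃ a' b', c.A a' b' ∧ ((a' < v ∧ a = a') ∨ (v ≤ a' ∧ a = a' + 1)) ∧
      ((b' < v ∧ b = b') ∨ (v ≤ b' ∧ b = b' + 1)) := by
  rcases h with ⟨h1, h2, _⟩ | ⟨a', b', hab, h1, h2⟩
  · exact Or.inl ⟨h1, h2⟩
  · refine Or.inr ⟨a', b', hab, ?_, ?_⟩
    · simp only [sh] at h1; split_ifs at h1 <;> omega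
    · simp only [sh] at h2; split_ifs at h2 <;> omega

lemma sum_gt (S : Finset ℕ) (g : ℕ → ℚ) :
    ∑ v ∈ S, g #(S.filter (fun s => v < s)) = ∑ j ∈ Finset.range #S, g j := by
  induction S using Finset.induction_on_min with
  | empty => simp
  | insert a s ha ih =>
    have hn : a ∉ s := fun h => lt_irrefl _ (ha a h)
    rw [Finset.sum_insert hn, Finset.card_insert_of_notMem hn, Finset.sum_range_succ, add_comm, ← ih]
    congr 1
    · apply Finset.sum_congr rfl
      intro v hv
      have := ha v hv
      congr 2
      ext t; simp only [Finset.mem_filter, Finset.mem_insert]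
      constructor
      · rintro ⟨rfl | h, h2⟩
        · omega
        · exact ⟨h, h2⟩
      · rintro ⟨h, h2⟩; exact ⟨Or.inr h, h2⟩
    · congr 2
      ext t; simp only [Finset.mem_filter, Finset.mem_insert]
      constructor
      · rintro ⟨rfl | h, h2⟩
        · omega
        · exact h
      · intro h; exact ⟨Or.inr h, ha _ h⟩

lemma sum_ge (S : Finset ℕ) (g : ℕ → ℚ) :
    ∑ v ∈ S, g #(S.filter (fun s => v ≤ s)) = ∑ j ∈ Finset.range #S, g (j + 1) := by
  rw [← sum_gt S (fun j => g (j+1))]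
  apply Finset.sum_congr rfl
  intro v hv
  congr 1
  have : S.filter (fun s => v ≤ s) = insert v (S.filter (fun s => v < s)) := by
    ext t; simp only [Finset.mem_filter, Finset.mem_insert]
    constructor
    · rintro ⟨h, h2⟩
      rcases h2.lt_or_eq with h3 | h3
      · exact Or.inr ⟨h, h3⟩
      · exact Or.inl h3.symm
    · rintro (rfl | ⟨h, h2⟩)
      · exact ⟨hv, le_rfl⟩
      · exact ⟨h, h2.le⟩
  rw [this, Finset.card_insert_of_notMem (by simp)]

def Cfg.Z (c : Cfg) (k : ℕ) : Prop := #c.act = k ∧ ∃ a b, c.A a b ∧ ∀ s ∈ c.act, b < s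

def Cfg.G (c : Cfg) : Prop := ∃ x, x < c.n ∧ (∀ s, s ∈ c.act ↔ s = x ∨ s = c.n) ∧
  (∀ a b, c.A a b → a < x ∧ x ≤ b) ∧ ∃ a b, c.A a b

def Cfg.D (c : Cfg) : Prop := (∀ s, s ≤ c.n → s ∈ c.act) ∧ ∀ a b, ¬ c.A a b

def Cfg.E (c : Cfg) (p r : ℕ) : Prop := ∃ w, c.A w (w+1) ∧ (∀ a b, c.A a b → a ≤ w ∧ w + 1 ≤ b) ∧
  w + 1 ∈ c.act ∧ c.n ∈ c.act ∧ #(c.act.filter (fun s => s ≤ w)) = p ∧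
  #(c.act.filter (fun s => w + 2 ≤ s)) = r

structure Cfg.FF (c : Cfg) (x q : ℕ) (m r : ℕ) : Prop where
  hxq : x < q
  hx : x ∈ c.act
  hq : q ∈ c.act
  hmin : ∀ s ∈ c.act, x ≤ s
  hA : ∀ a b, c.A a b → x ≤ b ∧ a < q ∧ (b < q → a < x)
  hex : ∃ a b, c.A a b ∧ x ≤ a
  hb : ∃ a b, c.A a b ∧ ∀ s ∈ c.act, s ≠ x → b < s
  hs : ∀ s ∈ c.act, s ≠ x → s ≠ q → ∃ a b, c.A a b ∧ x ≤ a ∧ (s ≤ a ∨ b < s)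
  hm : #(c.act.filter (fun s => x < s ∧ s < q)) = m
  hr : #(c.act.filter (fun s => q < s)) = r

def Cfg.F (c : Cfg) (m r : ℕ) : Prop := ∃ x q, c.FF x q m r

/-- generic: if the insertion kills all the lower sites -/
lemma Cfg.toZ {c : Cfg} (h : c.WF) {v a b : ℕ} (hab : c.A a b) (hbv : b < v)
    (hk : ∀ s, s ≤ v → s ∉ (c.step v).act) : (c.step v).Z #(c.act.filter (fun s => v ≤ s)) := by
  have hall : ∀ s ∈ (c.step v).act, v < s := by
    intro s hs
    by_contra hc
    exact hk s (by omega) hs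
  constructor
  · rw [← Cfg.card_up h v (fun s => v ≤ s) (fun s => v < s) (by simp) (by simp) (by intros; omega)]
    congr 1
    ext s; simp only [Finset.mem_filter]
    exact ⟨fun hs => ⟨hs, hall s hs⟩, fun hs => hs.1⟩
  · have := h _ _ hab
    refine ⟨_, _, Cfg.A_old hab, fun s hs => ?_⟩
    have := hall s hs
    simp only [sh]; split_ifs; omega

lemma Cfg.Z_step {c : Cfg} (h : c.WF) {k v : ℕ} (hc : c.Z k) (hv : v ∈ c.act) :
    (c.step v).Z #(c.act.filter (fun s => v ≤ s)) := by
  obtain ⟨_, a, b, hab, hs⟩ := hc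
  refine Cfg.toZ h hab (hs v hv) fun s hsv hs' => ?_
  rw [Cfg.act_low (Cfg.act_le hv) hsv] at hs'
  have h1 := hs'.2 _ _ hab
  have h2 := hs _ hs'.1
  have h3 := hs _ hv
  omega

lemma Cfg.G_x {c : Cfg} (h : c.WF) {x : ℕ} (h1 : x < c.n) (h2 : ∀ s, s ∈ c.act ↔ s = x ∨ s = c.n)
    (h3 : ∀ a b, c.A a b → a < x ∧ x ≤ b) : (c.step x).E 1 1 := by
  refine ⟨x, Cfg.A_new (by omega) (by omega), ?_, ?_, ?_, ?_, ?_⟩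
  · intro a b hab
    rcases Cfg.A_elim hab with h4 | ⟨a', b', h4, h5, h6⟩
    · omega
    · have := h3 _ _ h4; omega
  · rw [Cfg.act_up h le_rfl, h2]; simp
  · change c.n + 1 ∈ _
    rw [Cfg.act_up h (by omega), h2]; simp
  · rw [Finset.card_eq_one]
    refine ⟨x, ?_⟩
    ext s
    simp only [Finset.mem_filter, Finset.mem_singleton]
    constructor
    · rintro ⟨h4, h5⟩
      rw [Cfg.act_low (by omega) h5, h2] at h4
      omega
    · rintro rfl
      rw [Cfg.act_low (by omega) le_rfl, h2]
      refine ⟨⟨Or.inl rfl, fun a b hab => ?_⟩, le_rfl⟩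
      have := h3 _ _ hab; omega
  · rw [Cfg.card_up h x (fun s => x + 1 ≤ s) _ (by intros; omega) (by intros; omega) (by intros; omega),
      Finset.card_eq_one]
    refine ⟨c.n, ?_⟩
    ext s
    simp only [Finset.mem_filter, Finset.mem_singleton, h2]
    omega

lemma Cfg.G_top {c : Cfg} (h : c.WF) (hc : c.G) : (c.step c.n).G := by
  obtain ⟨x, h1, h2, h3, a, b, hab⟩ := hc
  refine ⟨x, by simp [Cfg.step]; omega, ?_, ?_, _, _, Cfg.A_old hab⟩
  · intro s
    change _ ↔ _ ∨ s = c.n + 1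
    rcases le_or_gt s c.n with h4 | h4
    · rw [Cfg.act_low le_rfl h4, h2]
      constructor
      · rintro ⟨h5, h6⟩
        have := h6 _ _ hab
        have := h _ _ hab
        omega
      · rintro (rfl | h5)
        · refine ⟨Or.inl rfl, fun a b hab => ?_⟩
          have := h3 _ _ hab
          have := h _ _ hab
          omega
        · omega
    · obtain ⟨t, rfl⟩ : ∃ t, s = t + 1 := ⟨s - 1, by omega⟩
      rw [Cfg.act_up h (by omega), h2]
      omega
  · intro a b hab
    rcases Cfg.A_elim hab with h4 | ⟨a', b', h4, h5, h6⟩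
    · have := h.step le_rfl _ _ hab
      simp only [Cfg.step] at this
      omega
    · have := h3 _ _ h4
      have := h _ _ h4
      omega

lemma Cfg.D_top {c : Cfg} (h : c.WF) (hc : c.D) : (c.step c.n).D := by
  obtain ⟨h1, h2⟩ := hc
  constructor
  · intro s hs
    change s ≤ c.n + 1 at hs
    rcases le_or_gt s c.n with h4 | h4
    · rw [Cfg.act_low le_rfl h4]
      exact ⟨h1 _ h4, fun a b hab => absurd hab (h2 a b)⟩
    · obtain ⟨t, rfl⟩ : ∃ t, s = t + 1 := ⟨s - 1, by omega⟩
      rw [Cfg.act_up h (by omega)]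
      exact h1 _ (by omega)
  · rintro a b hab
    rcases Cfg.A_elim hab with h4 | ⟨a', b', h4, h5, h6⟩
    · have := h.step le_rfl _ _ hab
      simp only [Cfg.step] at this
      omega
    · exact h2 _ _ h4

lemma Cfg.D_step {c : Cfg} (h : c.WF) (hc : c.D) {v : ℕ} (hv : v < c.n) :
    (c.step v).E (v + 1) (c.n - v) := by
  obtain ⟨h1, h2⟩ := hc
  refine ⟨v, Cfg.A_new (by omega) (by omega), ?_, ?_, ?_, ?_, ?_⟩
  · intro a b hab
    rcases Cfg.A_elim hab with h4 | ⟨a', b', h4, h5, h6⟩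
    · omega
    · exact absurd h4 (h2 _ _)
  · rw [Cfg.act_up h le_rfl]; exact h1 _ hv.le
  · change c.n + 1 ∈ _
    rw [Cfg.act_up h (by omega)]; exact h1 _ le_rfl
  · rw [show Finset.filter (fun s => s ≤ v) (c.step v).act = Finset.range (v+1) from ?_]
    · simp
    ext s
    simp only [Finset.mem_filter, Finset.mem_range]
    constructor
    · rintro ⟨_, h5⟩; omega
    · intro h4
      refine ⟨?_, by omega⟩
      rw [Cfg.act_low (by omega) (by omega)]
      exact ⟨h1 _ (by omega), fun a b hab => absurd hab (h2 a b)⟩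
  · rw [Cfg.card_up h v (fun s => v + 1 ≤ s) _ (by intros; omega) (by intros; omega) (by intros; omega)]
    rw [show Finset.filter (fun s => v + 1 ≤ s) c.act = Finset.Icc (v+1) c.n from ?_]
    · simp
    ext s
    simp only [Finset.mem_filter, Finset.mem_Icc]
    constructor
    · rintro ⟨h4, h5⟩; exact ⟨h5, Cfg.act_le h4⟩
    · rintro ⟨h4, h5⟩; exact ⟨h1 _ h5, h4⟩

lemma Cfg.E_low {c : Cfg} (h : c.WF) {w v : ℕ} (h1 : c.A w (w+1))
    (h2 : ∀ a b, c.A a b → a ≤ w ∧ w + 1 ≤ b) (h3 : w + 1 ∈ c.act)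
    (hv : v ∈ c.act) (hvw : v ≤ w) :
    (c.step v).F #((c.act.filter (fun s => s ≤ w)).filter (fun s => v < s))
      #(c.act.filter (fun s => w + 2 ≤ s)) := by
  have hvn := Cfg.act_le hv
  have hwn := h _ _ h1
  have hlow : ∀ s ∈ (c.step v).act, v + 1 ≤ s := by
    intro s hs
    by_contra hc
    rw [Cfg.act_low hvn (by omega)] at hs
    have := hs.2 _ _ h1
    omega
  have hA1 : (c.step v).A (w + 1) (w + 2) := by
    have := Cfg.A_old (v := v) h1
    simpa [sh, show ¬ w < v by omega, show ¬ w + 1 < v by omega] using this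
  have hA2 : (c.step v).A v (v + 1) := Cfg.A_new (by omega) (by omega)
  refine ⟨v + 1, w + 2, by omega, ?_, ?_, hlow, ?_, ⟨_, _, hA1, by omega⟩, ⟨_, _, hA2, ?_⟩, ?_, ?_, ?_⟩
  · rwa [Cfg.act_up h le_rfl]
  · rwa [Cfg.act_up h (by omega)]
  · intro a b hab
    rcases Cfg.A_elim hab with h4 | ⟨a', b', h4, h5, h6⟩
    · omega
    · have := h2 _ _ h4; omega
  · intro s hs hne
    have := hlow s hs
    omega
  · intro s hs hne hne2
    exact ⟨_, _, hA1, by omega, by omega⟩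
  · rw [Finset.filter_filter]
    apply Cfg.card_up h v
    all_goals intros; omega
  · apply Cfg.card_up h v
    all_goals intros; omega

lemma Cfg.E_mid {c : Cfg} (h : c.WF) {w p r : ℕ} (h1 : c.A w (w+1))
    (h2 : ∀ a b, c.A a b → a ≤ w ∧ w + 1 ≤ b) (h3 : w + 1 ∈ c.act) (h4 : c.n ∈ c.act)
    (h5 : #(c.act.filter (fun s => s ≤ w)) = p)
    (h6 : #(c.act.filter (fun s => w + 2 ≤ s)) = r) (hr : 0 < r) :
    (c.step (w+1)).E (p + 1) r := by
  have hwn := h _ _ h1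
  have hn : w + 2 ≤ c.n := by
    rw [← h6, Finset.card_pos] at hr
    obtain ⟨s, hs⟩ := hr
    simp only [Finset.mem_filter] at hs
    have := Cfg.act_le hs.1
    omega
  refine ⟨w + 1, Cfg.A_new (by omega) (by omega), ?_, ?_, ?_, ?_, ?_⟩
  · intro a b hab
    rcases Cfg.A_elim hab with h4 | ⟨a', b', h4, h5, h6⟩
    · omega
    · have := h2 _ _ h4; omega
  · rwa [Cfg.act_up h le_rfl]
  · change c.n + 1 ∈ _
    rwa [Cfg.act_up h (by omega)]
  · rw [← h5, ← Finset.card_insert_of_notMem (a := w + 1) (by simp)]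
    congr 1
    ext s
    simp only [Finset.mem_filter, Finset.mem_insert]
    constructor
    · rintro ⟨h7, h8⟩
      rw [Cfg.act_low (by omega) h8] at h7
      rcases h8.lt_or_eq with h9 | h9
      · exact Or.inr ⟨h7.1, by omega⟩
      · exact Or.inl h9
    · rintro h7
      have h8 : s ∈ c.act ∧ s ≤ w + 1 := by
        rcases h7 with rfl | ⟨h7, h8⟩
        · exact ⟨h3, le_rfl⟩
        · exact ⟨h7, by omega⟩
      rw [Cfg.act_low (by omega) h8.2]
      refine ⟨⟨h8.1, fun a b hab => ?_⟩, h8.2⟩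
      have := h2 _ _ hab
      omega
  · rw [← h6]
    apply Cfg.card_up h (w+1)
    all_goals intros; omega

lemma Cfg.E_high_act {c : Cfg} {w v : ℕ} (h1 : c.A w (w+1))
    (h2 : ∀ a b, c.A a b → a ≤ w ∧ w + 1 ≤ b) (h3 : w + 1 ∈ c.act)
    (hv : v ∈ c.act) (hvw : w + 2 ≤ v) (s : ℕ) (hs : s ≤ v) :
    s ∈ (c.step v).act ↔ s = w + 1 := by
  have hvn := Cfg.act_le hv
  rw [Cfg.act_low hvn hs]
  constructor
  · rintro ⟨h4, h5⟩
    have := h5 _ _ h1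
    omega
  · rintro rfl
    refine ⟨h3, fun a b hab => ?_⟩
    have := h2 _ _ hab
    omega

lemma Cfg.E_high {c : Cfg} (h : c.WF) {w v : ℕ} (h1 : c.A w (w+1))
    (h2 : ∀ a b, c.A a b → a ≤ w ∧ w + 1 ≤ b) (h3 : w + 1 ∈ c.act)
    (hv : v ∈ c.act) (hvw : w + 2 ≤ v) (hvn : v < c.n) :
    (c.step v).F 0 #((c.act.filter (fun s => w + 2 ≤ s)).filter (fun s => v < s)) := by
  have hact := Cfg.E_high_act h1 h2 h3 hv hvw
  have hA1 : (c.step v).A w (w + 1) := by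
    have := Cfg.A_old (v := v) h1
    simpa [sh, show w < v by omega, show w + 1 < v by omega] using this
  have hA2 : (c.step v).A v (v + 1) := Cfg.A_new (by omega) (by omega)
  have hge : ∀ s ∈ (c.step v).act, s = w + 1 ∨ v < s := by
    intro s hs
    rcases le_or_gt s v with h4 | h4
    · exact Or.inl ((hact s h4).1 hs)
    · exact Or.inr h4
  refine ⟨w + 1, v + 1, by omega, ?_, ?_, ?_, ?_, ⟨_, _, hA2, by omega⟩, ⟨_, _, hA1, ?_⟩, ?_, ?_, ?_⟩
  · rw [hact _ (by omega)]
  · rwa [Cfg.act_up h le_rfl]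
  · intro s hs; have := hge s hs; omega
  · intro a b hab
    rcases Cfg.A_elim hab with h4 | ⟨a', b', h4, h5, h6⟩
    · omega
    · have := h2 _ _ h4; omega
  · intro s hs hne; have := hge s hs; omega
  · intro s hs hne hne2
    have := hge s hs
    exact ⟨_, _, hA2, by omega, by omega⟩
  · rw [Finset.card_eq_zero, Finset.filter_eq_empty_iff]
    intro s hs
    have := hge s hs
    omega
  · rw [Finset.filter_filter]
    apply Cfg.card_up h v
    all_goals intros; omega

lemma Cfg.E_top {c : Cfg} (h : c.WF) {w : ℕ} (h1 : c.A w (w+1))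
    (h2 : ∀ a b, c.A a b → a ≤ w ∧ w + 1 ≤ b) (h3 : w + 1 ∈ c.act)
    (hv : c.n ∈ c.act) (hvw : w + 2 ≤ c.n) :
    (c.step c.n).G := by
  have hact := Cfg.E_high_act h1 h2 h3 hv hvw
  refine ⟨w + 1, by simp only [Cfg.step]; omega, ?_, ?_, _, _, Cfg.A_old h1⟩
  · intro s
    change _ ↔ _ ∨ s = c.n + 1
    rcases le_or_gt s c.n with h4 | h4
    · rw [hact s h4]
      omega
    · obtain ⟨t, rfl⟩ : ∃ t, s = t + 1 := ⟨s - 1, by omega⟩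
      rw [Cfg.act_up h (by omega)]
      constructor
      · intro h5; have := Cfg.act_le h5; omega
      · intro h5
        have : t = c.n := by omega
        rwa [this]
  · intro a b hab
    rcases Cfg.A_elim hab with h4 | ⟨a', b', h4, h5, h6⟩
    · have := h.step le_rfl _ _ hab
      simp only [Cfg.step] at this
      omega
    · have := h2 _ _ h4
      have := h _ _ h4
      omega

lemma Cfg.F_x {c : Cfg} (h : c.WF) {x q m r : ℕ} (hc : c.FF x q m r) : (c.step x).F m r := by
  obtain ⟨hxq, hx, hq, hmin, hA, ⟨a0, b0, hex, hex'⟩, ⟨a1, b1, hb, hb'⟩, hs, hm, hr⟩ := hc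
  have hqn := Cfg.act_le hq
  have hlow : ∀ s ∈ (c.step x).act, x + 1 ≤ s := by
    intro s hs
    by_contra hc
    rw [Cfg.act_low (by omega) (by omega)] at hs
    have := hs.2 _ _ hex
    omega
  have hA2 : (c.step x).A x (x + 1) := Cfg.A_new (by omega) (by omega)
  refine ⟨x + 1, q + 1, by omega, ?_, ?_, hlow, ?_, ⟨_, _, Cfg.A_old hex, ?_⟩, ⟨_, _, hA2, ?_⟩, ?_, ?_, ?_⟩
  · rwa [Cfg.act_up h le_rfl]
  · rwa [Cfg.act_up h (by omega)]
  · intro a b hab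
    rcases Cfg.A_elim hab with h4 | ⟨a', b', h4, h5, h6⟩
    · omega
    · have := hA _ _ h4; omega
  · simp only [sh]; split_ifs <;> omega
  · intro s hs hne; have := hlow s hs; omega
  · intro s hs1 hne hne2
    have := hlow s hs1
    obtain ⟨t, rfl⟩ : ∃ t, s = t + 1 := ⟨s - 1, by omega⟩
    rw [Cfg.act_up h (by omega)] at hs1
    obtain ⟨a, b, hab, h4, h5⟩ := hs t hs1 (by omega) (by omega)
    refine ⟨_, _, Cfg.A_old hab, ?_, ?_⟩
    · simp only [sh]; split_ifs <;> omega
    · simp only [sh]; split_ifs <;> omega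
  · rw [← hm]
    apply Cfg.card_up h x
    all_goals intros; omega
  · rw [← hr]
    apply Cfg.card_up h x
    all_goals intros; omega

lemma Cfg.F_q {c : Cfg} (h : c.WF) {x q m r : ℕ} (hc : c.FF x q m r) : (c.step q).F 0 r := by
  obtain ⟨hxq, hx, hq, hmin, hA, ⟨a0, b0, hex, hex'⟩, ⟨a1, b1, hb, hb'⟩, hs, hm, hr⟩ := hc
  have hqn := Cfg.act_le hq
  have hact : ∀ s, s ≤ q → (s ∈ (c.step q).act ↔ s = x) := by
    intro s hsq
    rw [Cfg.act_low (by omega) hsq]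
    constructor
    · rintro ⟨h4, h5⟩
      by_contra hne
      have h6 := hb' s h4 hne
      have h7 := h5 _ _ hb
      omega
    · rintro rfl
      refine ⟨hx, fun a b hab => ?_⟩
      have := hA _ _ hab
      omega
  have hge : ∀ s ∈ (c.step q).act, s = x ∨ q < s := by
    intro s hs
    rcases le_or_gt s q with h4 | h4
    · exact Or.inl ((hact s h4).1 hs)
    · exact Or.inr h4
  have hbq := hb' q hq (by omega)
  have hwb := h _ _ hb
  have hA1 := hA _ _ hex
  refine ⟨x, q + 1, by omega, ?_, ?_, ?_, ?_, ⟨_, _, Cfg.A_old hex, ?_⟩, ⟨_, _, Cfg.A_old hb, ?_⟩, ?_, ?_, ?_⟩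
  · rw [hact _ (by omega)]
  · rwa [Cfg.act_up h le_rfl]
  · intro s hs; have := hge s hs; omega
  · intro a b hab
    rcases Cfg.A_elim hab with h4 | ⟨a', b', h4, h5, h6⟩
    · omega
    · have := hA _ _ h4; omega
  · simp only [sh]; split_ifs <;> omega
  · intro s hs hne
    have := hge s hs
    simp only [sh]; split_ifs; omega
  · intro s hs1 hne hne2
    have h5 := hge s hs1
    have h6 := Cfg.act_le hs1
    simp only [Cfg.step] at h6
    exact ⟨_, _, Cfg.A_new (v := q) (b := q + 1) (by omega) (by omega), by omega, by omega⟩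
  · rw [Finset.card_eq_zero, Finset.filter_eq_empty_iff]
    intro s hs
    have := hge s hs
    omega
  · rw [← hr]
    apply Cfg.card_up h q
    all_goals intros; omega

lemma Cfg.F_rest {c : Cfg} (h : c.WF) {x q m r v : ℕ} (hc : c.FF x q m r) (hv : v ∈ c.act)
    (hvx : v ≠ x) (hvq : v ≠ q) : (c.step v).Z #(c.act.filter (fun s => v ≤ s)) := by
  obtain ⟨hxq, hx, hq, hmin, hA, ⟨a0, b0, hex, hex'⟩, ⟨a1, b1, hb, hb'⟩, hs, hm, hr⟩ := hc
  refine Cfg.toZ h hb (hb' v hv hvx) fun s hsv hs' => ?_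
  rw [Cfg.act_low (Cfg.act_le hv) hsv] at hs'
  obtain ⟨a, b, hab, h4, h5⟩ := hs v hv hvx hvq
  have h6 := hs'.2 _ _ hab
  have h7 := hs'.2 _ _ hb
  have h8 := hb' v hv hvx
  by_cases hsx : s = x
  · omega
  · have := hb' s hs'.1 hsx
    omega

section alg
variable {R : Type*} [CommRing R] (x u w : R)

def gP : R := x^3*u^3*w
def gQ : R := u*(x^4*u^3*w-u+w*(1-x))
def gG : R := w*((1-x)+x*(1-x)*(w*u^2+gP x u w*u+gQ x u w*u+u*(1-w)))
def gR : R := u*(1+x*gG x u w-w)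
def gF (m r : ℕ) : R := u^(r+m+2) + x^2*u^(r+2)*w
def gE (p r : ℕ) : R := w*u^(r+p) + p*gP x u w*u^r + gQ x u w*u^r + gR x u w
def gal : R := x*(1-x)*w^2
def gbe : R := (1-x)*w*(-x*w+x^2*u^2*w+gQ x u w*(1-x)+x^2*w^2)
def gga : R := u*(x*gR x u w - x^3*u^3*w)
def gde : R := u*(1-x^2*u^2*w-gQ x u w-x*gR x u w+x*gga x u w)
def gD (n : ℕ) : R := (gal x w*(n+1)+gbe x u w)*u^(n+1)+gga x u w*(n+1)+gde x u w

variable {x u w} (hu : u*(1-x)=1) (hw : w*(1-2*x)=1)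

include hu in
lemma tele (a k : ℕ) : x * ∑ j ∈ range k, u^(a+j+1) = u^(a+k) - u^a := by
  induction k with
  | zero => simp
  | succ k ih =>
    rw [sum_range_succ, mul_add, ih]
    linear_combination (-u^(a+k)) * hu

include hu hw in
lemma relG : gG x u w = 1 + x * (gE x u w 1 1 + gG x u w) := by
  simp only [gE, gR]
  generalize h : gG x u w = g
  simp only [gG] at h
  simp only [gP, gQ] at *
  push_cast
  grind

include hu hw in
lemma relF0 (r : ℕ) : gF x u w 0 r = u^r*w := by
  simp only [gF]
  have : u^(r+2) = u^r*u^2 := by ring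
  simp only [add_zero, this]
  generalize u^r = v
  grind

include hu hw in
lemma relF (m r : ℕ) : gF x u w m r = 1 + x * (gF x u w m r + gF x u w 0 r
    + ∑ j ∈ range r, u^(j+1) + ∑ j ∈ range m, u^(r+2+j)) := by
  have h1 := tele hu 0 r
  have h2 := tele hu (r+1) m
  simp only [zero_add, pow_zero] at h1
  have h3 : ∑ j ∈ range m, u^(r+2+j) = ∑ j ∈ range m, u^(r+1+j+1) := by
    apply sum_congr rfl; intros; ring
  rw [h3, relF0 hu hw, mul_add, mul_add, h1, h2]
  simp only [gF]
  have e1 : u^(r+m+2) = u^r*u^m*u^2 := by ring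
  have e2 : u^(r+1+m) = u^r*u^m*u := by ring
  have e3 : u^(r+2) = u^r*u^2 := by ring
  have e4 : u^(r+1) = u^r*u := by ring
  rw [e1,e2,e3,e4]
  generalize u^r = v
  generalize u^m = z
  grind

include hu hw in
lemma relE (p r : ℕ) : gE x u w p (r+1) = 1 + x * (∑ j ∈ range p, gF x u w j (r+1) + gE x u w (p+1) (r+1)
    + (∑ j ∈ range r, gF x u w 0 (j+1) + gG x u w)) := by
  have h1 := tele hu 0 r
  have h2 := tele hu (r+2) p
  simp only [zero_add, pow_zero] at h1
  simp only [relF0 hu hw, ← sum_mul]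
  have h3 : ∑ j ∈ range p, gF x u w j (r+1) = ∑ j ∈ range p, u^(r+2+j+1) + p * (x^2*u^(r+3)*w) := by
    simp only [gF, sum_add_distrib, sum_const, card_range, nsmul_eq_mul]
    congr 1
    apply sum_congr rfl; intros; ring
  rw [h3]
  have h4 : x * (∑ j ∈ range p, u^(r+2+j+1) + p * (x^2*u^(r+3)*w) + gE x u w (p+1) (r+1)
    + ((∑ j ∈ range r, u^(j+1))*w + gG x u w)) = (u^(r+2+p) - u^(r+2)) + x * (p * (x^2*u^(r+3)*w)) +
      x * gE x u w (p+1) (r+1) + (u^r-1)*w + x * gG x u w := by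
    rw [← h1, ← h2]; ring
  rw [h4]
  simp only [gE, gR]
  generalize gG x u w = g
  have e1 : u^(r+1+p) = u^r*u^p*u := by ring
  have e2 : u^(r+1+(p+1)) = u^r*u^p*u^2 := by ring
  have e3 : u^(r+2) = u^r*u^2 := by ring
  have e4 : u^(r+1) = u^r*u := by ring
  have e5 : u^(r+2+p) = u^r*u^p*u^2 := by ring
  have e6 : u^(r+3) = u^r*u^3 := by ring
  rw [e1,e2,e3,e4,e5,e6]
  push_cast
  simp only [gP, gQ]
  generalize u^r = v
  generalize u^p = z
  generalize (p:R) = p'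
  clear h1 h2 h3 h4 e1 e2 e3 e4 e5 e6
  grind

include hu in
lemma T0 (n : ℕ) : x * ∑ v ∈ range n, u^(n-v) = u^n - 1 := by
  induction n with
  | zero => simp
  | succ n ih =>
    rw [sum_range_succ']
    simp only [Nat.add_sub_add_right, Nat.sub_zero]
    rw [mul_add, ih]
    linear_combination (-u^n) * hu

include hu in
lemma T1 (n : ℕ) : x^2 * ∑ v ∈ range n, ((v+1 : ℕ) : R) * u^(n-v) = u^n - 1 - n * x := by
  induction n with
  | zero => simp
  | succ n ih =>
    have h0 := T0 hu n
    rw [sum_range_succ']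
    simp only [Nat.add_sub_add_right, Nat.sub_zero]
    have : ∑ k ∈ range n, ((k+1+1 : ℕ) : R) * u^(n-k) = ∑ v ∈ range n, ((v+1 : ℕ) : R) * u^(n-v) + ∑ v ∈ range n, u^(n-v) := by
      rw [← sum_add_distrib]; apply sum_congr rfl; intros; push_cast; ring
    rw [this]
    push_cast at *
    linear_combination ih + x * h0 - u^n * (1+x) * hu

include hu hw in
lemma relD (n : ℕ) : gD x u w n = 1 + x * (∑ v ∈ range n, gE x u w (v+1) (n-v) + gD x u w (n+1)) := by
  have h0 := T0 hu n
  have h1 := T1 hu n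
  have h3 : x * ∑ v ∈ range n, gE x u w (v+1) (n-v) = x * (n * (w * u^(n+1))) +
     x^2*u^3*w*(u^n-1-n*x) + gQ x u w * (u^n-1) + x * (n * gR x u w) := by
    have : ∑ v ∈ range n, gE x u w (v+1) (n-v) = n * (w * u^(n+1)) + gP x u w * (∑ v ∈ range n, ((v+1 : ℕ) : R) * u^(n-v))
      + gQ x u w * (∑ v ∈ range n, u^(n-v)) + n * gR x u w := by
      have hn : ∀ c : R, (n:R) * c = ∑ v ∈ range n, c := by intro c; simp
      rw [hn, hn, mul_sum, mul_sum, ← sum_add_distrib, ← sum_add_distrib, ← sum_add_distrib]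
      apply sum_congr rfl
      intro v hv
      rw [mem_range] at hv
      simp only [gE]
      rw [show n - v + (v+1) = n + 1 by omega]
      ring
    rw [this]
    simp only [gP]
    linear_combination (x^2*u^3*w) * h1 + gQ x u w * h0
  rw [mul_add, h3]
  simp only [gD, gde, gga, gbe, gal]
  generalize gR x u w = g
  have e1 : u^(n+1) = u^n*u := by ring
  have e2 : u^(n+1+1) = u^n*u^2 := by ring
  rw [e1,e2]
  push_cast
  generalize hq : gQ x u w = q
  generalize u^n = z
  generalize (n:R) = n
  clear h0 h1 h3 e1 e2 hq
  grind

include hu hw in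
lemma relFinal : (1-x)^7*(1-2*x)^3*gD x u w 0 = 1 - 12*x + 64*x^2 - 198*x^3 + 393*x^4 - 521*x^5 + 463*x^6 - 269*x^7 + 95*x^8 - 17*x^9 := by
  simp only [gD, gde, gga, gbe, gal, gR, gG, gQ, gP]
  push_cast
  grind

end alg

lemma sum_split (S : Finset ℕ) (q : ℕ) (hq : q ∈ S) (f : ℕ → ℚ) :
    ∑ v ∈ S, f v = ∑ v ∈ S.filter (fun s => s < q), f v + f q + ∑ v ∈ S.filter (fun s => q < s), f v := by
  rw [← Finset.sum_filter_add_sum_filter_not S (fun s => s < q), add_assoc]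
  congr 1
  rw [← Finset.sum_insert (s := S.filter (fun s => q < s)) (by simp)]
  apply Finset.sum_congr _ (fun _ _ => rfl)
  ext t
  simp only [Finset.mem_filter, Finset.mem_insert, not_lt]
  constructor
  · rintro ⟨h1, h2⟩
    rcases h2.lt_or_eq with h3 | h3
    · exact Or.inr ⟨h1, h3⟩
    · exact Or.inl h3.symm
  · rintro (rfl | ⟨h1, h2⟩)
    · exact ⟨hq, le_rfl⟩
    · exact ⟨h1, h2.le⟩

lemma coeff_rel {f g : PowerSeries ℚ} (h : f = 1 + PowerSeries.X * g) :
    PowerSeries.coeff 0 f = 1 ∧ ∀ m, PowerSeries.coeff (m+1) f = PowerSeries.coeff m g := by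
  subst h
  constructor
  · simp
  · intro m
    simp [PowerSeries.coeff_succ_X_mul, PowerSeries.coeff_one]

lemma cnt_succ (m : ℕ) (c : Cfg) : ((Cfg.cnt (m+1) c : ℕ) : ℚ) = ∑ v ∈ c.act, ((c.step v).cnt m : ℚ) := by
  simp [Cfg.cnt]

theorem cnt_main (u w : PowerSeries ℚ) (hu : u * (1 - PowerSeries.X) = 1)
    (hw : w * (1 - 2 * PowerSeries.X) = 1) (m : ℕ) : ∀ c : Cfg, c.WF →
    (∀ k, c.Z k → (c.cnt m : ℚ) = PowerSeries.coeff m (u^k)) ∧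
    (∀ a r, c.F a r → (c.cnt m : ℚ) = PowerSeries.coeff m (gF PowerSeries.X u w a r)) ∧
    (c.G → (c.cnt m : ℚ) = PowerSeries.coeff m (gG PowerSeries.X u w)) ∧
    (∀ p r, c.E p (r+1) → (c.cnt m : ℚ) = PowerSeries.coeff m (gE PowerSeries.X u w p (r+1))) ∧
    (c.D → (c.cnt m : ℚ) = PowerSeries.coeff m (gD PowerSeries.X u w c.n)) := by
  have rZ : ∀ k, u^k = 1 + PowerSeries.X * ∑ j ∈ Finset.range k, u^(j+1) := by
    intro k
    have := tele hu 0 k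
    simp only [zero_add, pow_zero] at this
    rw [this]; ring
  induction m with
  | zero =>
    intro c _
    simp only [Cfg.cnt, Nat.cast_one]
    refine ⟨fun k _ => ?_, fun a r _ => ?_, fun _ => ?_, fun p r _ => ?_, fun _ => ?_⟩
    · exact (coeff_rel (rZ k)).1.symm
    · exact (coeff_rel (relF hu hw a r)).1.symm
    · exact (coeff_rel (relG hu hw)).1.symm
    · exact (coeff_rel (relE hu hw p r)).1.symm
    · exact (coeff_rel (relD hu hw _)).1.symm
  | succ m ih =>
    intro c hc
    have ihs : ∀ v ∈ c.act, _ := fun v hv => ih (c.step v) (hc.step (Cfg.act_le hv))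
    rw [cnt_succ]
    refine ⟨fun k h => ?_, fun a r h => ?_, fun h => ?_, fun p r h => ?_, fun h => ?_⟩
    · rw [(coeff_rel (rZ k)).2, map_sum, ← h.1, ← sum_ge c.act (fun j => PowerSeries.coeff m (u^j))]
      apply Finset.sum_congr rfl
      intro v hv
      exact (ihs v hv).1 _ (Cfg.Z_step hc h hv)
    · obtain ⟨x, q, h⟩ := h
      rw [(coeff_rel (relF hu hw a r)).2, sum_split c.act q h.hq]
      have e1 : c.act.filter (fun s => s < q) = insert x (c.act.filter (fun s => x < s ∧ s < q)) := by
        ext t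
        simp only [Finset.mem_filter, Finset.mem_insert]
        constructor
        · rintro ⟨h1, h2⟩
          have := h.hmin t h1
          rcases this.lt_or_eq with h3 | h3
          · exact Or.inr ⟨h1, h3, h2⟩
          · exact Or.inl h3.symm
        · rintro (rfl | ⟨h1, h2, h3⟩)
          · exact ⟨h.hx, h.hxq⟩
          · exact ⟨h1, h3⟩
      rw [e1, Finset.sum_insert (by simp)]
      simp only [map_add, map_sum]
      have s1 : ∑ v ∈ c.act.filter (fun s => q < s), ((c.step v).cnt m : ℚ) =
          ∑ j ∈ Finset.range r, PowerSeries.coeff m (u^(j+1)) := by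
        rw [← h.hr, ← sum_ge _ (fun j => PowerSeries.coeff m (u^j))]
        apply Finset.sum_congr rfl
        intro v hv
        simp only [Finset.mem_filter] at hv
        have hxq := h.hxq
        rw [(ihs v hv.1).1 _ (Cfg.F_rest hc h hv.1 (by omega) (by omega))]
        congr 3
        ext t
        simp only [Finset.mem_filter]
        constructor
        · rintro ⟨h1, h2⟩; exact ⟨⟨h1, by omega⟩, h2⟩
        · rintro ⟨⟨h1, _⟩, h2⟩; exact ⟨h1, h2⟩
      have s2 : ∑ v ∈ c.act.filter (fun s => x < s ∧ s < q), ((c.step v).cnt m : ℚ) =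
          ∑ j ∈ Finset.range a, PowerSeries.coeff m (u^(r+2+j)) := by
        have := sum_ge (c.act.filter (fun s => x < s ∧ s < q)) (fun j => PowerSeries.coeff m (u^(r+1+j)))
        rw [h.hm] at this
        rw [show ∑ j ∈ Finset.range a, PowerSeries.coeff m (u^(r+2+j)) =
          ∑ j ∈ Finset.range a, PowerSeries.coeff m (u^(r+1+(j+1))) from
            Finset.sum_congr rfl (fun j _ => by congr 2; ring), ← this]
        apply Finset.sum_congr rfl
        intro v hv
        simp only [Finset.mem_filter] at hv
        have hxq := h.hxq
        rw [(ihs v hv.1).1 _ (Cfg.F_rest hc h hv.1 (by omega) (by omega))]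
        congr 2
        rw [← h.hr, ← Finset.card_insert_of_notMem (s := c.act.filter (fun s => q < s)) (a := q) (by simp),
          ← Finset.card_union_of_disjoint]
        · congr 1
          ext t
          simp only [Finset.mem_filter, Finset.mem_union, Finset.mem_insert]
          constructor
          · rintro ⟨h1, h2⟩
            rcases lt_trichotomy t q with h3 | h3 | h3
            · exact Or.inr ⟨⟨h1, by omega, h3⟩, h2⟩
            · exact Or.inl (Or.inl h3)
            · exact Or.inl (Or.inr ⟨h1, h3⟩)
          · rintro ((rfl | ⟨h1, h2⟩) | ⟨⟨h1, h2⟩, h3⟩)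
            · exact ⟨h.hq, by omega⟩
            · exact ⟨h1, by omega⟩
            · exact ⟨h1, h3⟩
        · rw [Finset.disjoint_left]
          intro t ht ht'
          simp only [Finset.mem_filter, Finset.mem_insert] at ht ht'
          omega
      rw [s1, s2, (ihs x h.hx).2.1 _ _ (Cfg.F_x hc h), (ihs q h.hq).2.1 _ _ (Cfg.F_q hc h)]
      ring
    · have hG := h
      obtain ⟨x, h1, h2, h3, -⟩ := h
      rw [(coeff_rel (relG hu hw)).2, show c.act = {x, c.n} by ext t; simp [h2],
        Finset.sum_pair (by omega), map_add]
      rw [(ihs x (by simp [h2])).2.2.2.1 1 0 (Cfg.G_x hc h1 h2 h3),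
        (ihs c.n (by simp [h2])).2.2.1 (Cfg.G_top hc hG)]
    · obtain ⟨w0, h1, h2, h3, h4, h5, h6⟩ := h
      have e1 : c.act.filter (fun s => s < w0 + 1) = c.act.filter (fun s => s ≤ w0) :=
        Finset.filter_congr (by intros; omega)
      have e2 : c.act.filter (fun s => w0 + 1 < s) = c.act.filter (fun s => w0 + 2 ≤ s) :=
        Finset.filter_congr (by intros; omega)
      rw [(coeff_rel (relE hu hw p r)).2, sum_split c.act (w0+1) h3, e1, e2]
      simp only [map_add, map_sum]
      have s1 : ∑ v ∈ c.act.filter (fun s => s ≤ w0), ((c.step v).cnt m : ℚ) =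
          ∑ j ∈ Finset.range p, PowerSeries.coeff m (gF PowerSeries.X u w j (r+1)) := by
        rw [← h5, ← sum_gt _ (fun j => PowerSeries.coeff m (gF PowerSeries.X u w j (r+1)))]
        apply Finset.sum_congr rfl
        intro v hv
        simp only [Finset.mem_filter] at hv
        rw [← h6]
        exact (ihs v hv.1).2.1 _ _ (Cfg.E_low hc h1 h2 h3 hv.1 hv.2)
      have hn : w0 + 2 ≤ c.n := by
        have hr : 0 < r + 1 := by omega
        rw [← h6, Finset.card_pos] at hr
        obtain ⟨s, hs⟩ := hr
        simp only [Finset.mem_filter] at hs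
        have := Cfg.act_le hs.1
        omega
      have s2 : ∑ v ∈ c.act.filter (fun s => w0 + 2 ≤ s), ((c.step v).cnt m : ℚ) =
          ∑ j ∈ Finset.range r, PowerSeries.coeff m (gF PowerSeries.X u w 0 (j+1)) +
            PowerSeries.coeff m (gG PowerSeries.X u w) := by
        have := sum_gt (c.act.filter (fun s => w0 + 2 ≤ s)) (fun j => PowerSeries.coeff m
          (if j = 0 then gG PowerSeries.X u w else gF PowerSeries.X u w 0 j))
        rw [h6, Finset.sum_range_succ'] at this
        simp only [Nat.add_eq_zero_iff, one_ne_zero, and_false, if_false, if_true] at this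
        rw [← this]
        apply Finset.sum_congr rfl
        intro v hv
        simp only [Finset.mem_filter] at hv
        have hvn := Cfg.act_le hv.1
        rcases hvn.lt_or_eq with h7 | h7
        · rw [if_neg]
          · exact (ihs v hv.1).2.1 _ _ (Cfg.E_high hc h1 h2 h3 hv.1 hv.2 h7)
          · rw [← Ne, ← Nat.pos_iff_ne_zero, Finset.card_pos]
            exact ⟨c.n, by simp [h4, h7, hn]⟩
        · rw [if_pos]
          · rw [h7]
            exact (ihs c.n h4).2.2.1 (Cfg.E_top hc h1 h2 h3 h4 hn)
          · rw [Finset.card_eq_zero, Finset.filter_eq_empty_iff]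
            intro s hs
            simp only [Finset.mem_filter] at hs
            have := Cfg.act_le hs.1
            omega
      rw [s1, s2, (ihs _ h3).2.2.2.1 (p+1) r (Cfg.E_mid hc h1 h2 h3 h4 h5 h6 (by omega))]
    · have e : c.act = Finset.range (c.n + 1) := by
        ext t
        rw [Finset.mem_range]
        exact ⟨fun h1 => by have := Cfg.act_le h1; omega, fun h1 => h.1 _ (by omega)⟩
      rw [(coeff_rel (relD hu hw _)).2, e, Finset.sum_range_succ]
      simp only [map_add, map_sum]
      congr 1
      · apply Finset.sum_congr rfl
        intro v hv
        rw [Finset.mem_range] at hv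
        have h7 := Cfg.D_step hc h hv
        obtain ⟨r, hr⟩ : ∃ r, c.n - v = r + 1 := ⟨c.n - v - 1, by omega⟩
        rw [hr] at h7 ⊢
        exact (ihs v (h.1 _ hv.le)).2.2.2.1 _ _ h7
      · exact (ihs c.n (h.1 _ le_rfl)).2.2.2.2 (Cfg.D_top hc h)

def Pat (a b c d : ℕ) : Prop := (a < c ∧ c < d ∧ d < b) ∨ (a < b ∧ b < c ∧ c < d) ∨ (c < d ∧ d < a ∧ a < b)

def Bad {n : ℕ} (π : Equiv.Perm (Fin n)) : Prop :=
  ∃ i j k l : Fin n, i < j ∧ j < k ∧ k < l ∧ Pat (π i) (π j) (π k) (π l)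

def conf {n : ℕ} (π : Equiv.Perm (Fin n)) : Cfg :=
  ⟨n,
   fun s => ∃ i j k : Fin n, i < j ∧ j < k ∧
    (((π i : ℕ) < π j ∧ (π j : ℕ) < π k ∧ s ≤ π i) ∨
     ((π j : ℕ) < π k ∧ (π k : ℕ) < π i ∧ (s ≤ π j ∨ ((π k : ℕ) < s ∧ s ≤ π i)))),
   fun a b => a < b ∧ ∃ i j : Fin n, i < j ∧ (π i : ℕ) = a ∧ (π j : ℕ) = b⟩

lemma conf_WF {n : ℕ} (π : Equiv.Perm (Fin n)) : (conf π).WF := by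
  rintro a b ⟨h, i, j, _, rfl, rfl⟩
  exact ⟨h, (π j).2⟩

def insFun {n : ℕ} (v : Fin (n+1)) (π : Equiv.Perm (Fin n)) : Fin (n+1) → Fin (n+1) :=
  Fin.cons v (fun i => v.succAbove (π i))

lemma insFun_inj {n : ℕ} (v : Fin (n+1)) (π : Equiv.Perm (Fin n)) : Function.Injective (insFun v π) := by
  intro i j hij
  induction i using Fin.cases with
  | zero =>
    induction j using Fin.cases with
    | zero => rfl
    | succ j => simp [insFun, Fin.succAbove_ne, (Fin.succAbove_ne _ _).symm] at hij
  | succ i =>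
    induction j using Fin.cases with
    | zero => simp [insFun, Fin.succAbove_ne] at hij
    | succ j => simpa [insFun] using hij

noncomputable def ins {n : ℕ} (v : Fin (n+1)) (π : Equiv.Perm (Fin n)) : Equiv.Perm (Fin (n+1)) :=
  Equiv.ofBijective (insFun v π) (Finite.injective_iff_bijective.1 (insFun_inj v π))

lemma ins_zero {n : ℕ} (v : Fin (n+1)) (π : Equiv.Perm (Fin n)) : ins v π 0 = v := rfl

lemma ins_succ {n : ℕ} (v : Fin (n+1)) (π : Equiv.Perm (Fin n)) (i : Fin n) :
    ins v π i.succ = v.succAbove (π i) := rfl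

lemma ins_succ_val {n : ℕ} (v : Fin (n+1)) (π : Equiv.Perm (Fin n)) (i : Fin n) :
    ((ins v π i.succ : Fin (n+1)) : ℕ) = sh v (π i) := by
  rw [ins_succ, Fin.succAbove, sh]
  simp only [Fin.lt_def, Fin.val_castSucc]
  split_ifs <;> simp

lemma ins_bij (n : ℕ) : Function.Bijective
    (fun p : Fin (n+1) × Equiv.Perm (Fin n) => ins p.1 p.2) := by
  rw [Fintype.bijective_iff_injective_and_card]
  constructor
  · rintro ⟨v, π⟩ ⟨v', π'⟩ h
    simp only at h
    have h0 : v = v' := by rw [← ins_zero v π, h, ins_zero]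
    subst h0
    have : π = π' := by
      ext i
      have := congrArg (fun e : Equiv.Perm (Fin (n+1)) => e i.succ) h
      simp only [ins_succ] at this
      rw [Fin.succAbove_right_injective this]
    rw [this]
  · simp [Fintype.card_perm, Nat.factorial_succ]

lemma ex4 {n : ℕ} (P : Fin (n+1) → Fin (n+1) → Fin (n+1) → Fin (n+1) → Prop) :
    (∃ i j k l, i < j ∧ j < k ∧ k < l ∧ P i j k l) ↔
    (∃ i j k l : Fin n, i < j ∧ j < k ∧ k < l ∧ P i.succ j.succ k.succ l.succ) ∨
    (∃ j k l : Fin n, j < k ∧ k < l ∧ P 0 j.succ k.succ l.succ) := by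
  constructor
  · rintro ⟨i, j, k, l, h1, h2, h3, h⟩
    obtain ⟨j, rfl⟩ := Fin.exists_succ_eq.2 (Fin.ne_zero_of_lt h1)
    obtain ⟨k, rfl⟩ := Fin.exists_succ_eq.2 (Fin.ne_zero_of_lt h2)
    obtain ⟨l, rfl⟩ := Fin.exists_succ_eq.2 (Fin.ne_zero_of_lt h3)
    rw [Fin.succ_lt_succ_iff] at h2 h3
    induction i using Fin.cases with
    | zero => exact Or.inr ⟨j, k, l, h2, h3, h⟩
    | succ i => exact Or.inl ⟨i, j, k, l, Fin.succ_lt_succ_iff.1 h1, h2, h3, h⟩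
  · rintro (⟨i, j, k, l, h1, h2, h3, h⟩ | ⟨j, k, l, h2, h3, h⟩)
    · exact ⟨_, _, _, _, Fin.succ_lt_succ_iff.2 h1, Fin.succ_lt_succ_iff.2 h2, Fin.succ_lt_succ_iff.2 h3, h⟩
    · exact ⟨_, _, _, _, Fin.succ_pos j, Fin.succ_lt_succ_iff.2 h2, Fin.succ_lt_succ_iff.2 h3, h⟩

lemma ex3 {n : ℕ} (P : Fin (n+1) → Fin (n+1) → Fin (n+1) → Prop) :
    (∃ i j k, i < j ∧ j < k ∧ P i j k) ↔
    (∃ i j k : Fin n, i < j ∧ j < k ∧ P i.succ j.succ k.succ) ∨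
    (∃ j k : Fin n, j < k ∧ P 0 j.succ k.succ) := by
  simp [Fin.exists_fin_succ, or_comm]

lemma ex2 {n : ℕ} (P : Fin (n+1) → Fin (n+1) → Prop) :
    (∃ i j, i < j ∧ P i j) ↔
    (∃ i j : Fin n, i < j ∧ P i.succ j.succ) ∨ (∃ j : Fin n, P 0 j.succ) := by
  simp [Fin.exists_fin_succ, or_comm]

lemma sh_lt (v a b : ℕ) : sh v a < sh v b ↔ a < b := by
  simp only [sh]; split_ifs <;> omega
lemma lt_sh (v a : ℕ) : v < sh v a ↔ v ≤ a := by
  simp only [sh]; split_ifs <;> omega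
lemma sh_lt' (v a : ℕ) : sh v a < v ↔ a < v := by
  simp only [sh]; split_ifs <;> omega
lemma le_sh (v s a : ℕ) : s ≤ sh v a ↔ pr v s ≤ a := by
  simp only [sh, pr]; split_ifs <;> omega
lemma sh_lt_s (v s a : ℕ) : sh v a < s ↔ a < pr v s := by
  simp only [sh, pr]; split_ifs <;> omega

lemma bad_ins {n : ℕ} (v : Fin (n+1)) (π : Equiv.Perm (Fin n)) :
    Bad (ins v π) ↔ Bad π ∨ (conf π).K v := by
  unfold Bad
  rw [ex4]
  apply or_congr
  · simp only [ins_succ_val, Pat, sh_lt]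
  · simp only [conf, ins_succ_val, ins_zero, Pat, sh_lt, lt_sh, sh_lt']
    constructor
    · rintro ⟨i, j, k, h1, h2, h3⟩
      exact ⟨i, j, k, h1, h2, by omega⟩
    · rintro ⟨i, j, k, h1, h2, h3⟩
      exact ⟨i, j, k, h1, h2, by omega⟩

lemma conf_ins {n : ℕ} (v : Fin (n+1)) (π : Equiv.Perm (Fin n)) :
    conf (ins v π) = (conf π).step v := by
  unfold conf Cfg.step
  congr 1
  · funext s
    apply propext
    rw [ex3]
    apply or_congr
    · simp only [ins_succ_val, sh_lt]
      simp only [le_sh, sh_lt_s]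
    · simp only [ins_succ_val, ins_zero, sh_lt, lt_sh, sh_lt']
      constructor
      · rintro ⟨j, k, h1, h2⟩
        by_cases h3 : (v:ℕ) ≤ π j
        · exact ⟨_, _, ⟨by omega, j, k, h1, rfl, rfl⟩, by omega⟩
        · refine ⟨_, _, ⟨by omega, j, k, h1, rfl, rfl⟩, ?_⟩
          simp only [sh] at h2
          split_ifs at h2 <;> omega
      · rintro ⟨a, b, ⟨h0, j, k, h1, rfl, rfl⟩, h2⟩
        refine ⟨j, k, h1, ?_⟩
        simp only [sh]
        split_ifs <;> omega
  · funext a b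
    apply propext
    rw [ex2]
    simp only [ins_succ_val, ins_zero]
    constructor
    · rintro ⟨hab, ⟨i, j, hij, rfl, rfl⟩ | ⟨j, rfl, rfl⟩⟩
      · exact Or.inr ⟨_, _, ⟨(sh_lt _ _ _).1 hab, i, j, hij, rfl, rfl⟩, rfl, rfl⟩
      · refine Or.inl ⟨rfl, hab, ?_⟩
        have := (π j).2
        simp only [sh]
        split_ifs <;> omega
    · rintro (⟨rfl, h1, h2⟩ | ⟨a', b', ⟨h0, i, j, hij, rfl, rfl⟩, rfl, rfl⟩)
      · refine ⟨h1, Or.inr ⟨π.symm ⟨b - 1, by omega⟩, rfl, ?_⟩⟩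
        rw [Equiv.apply_symm_apply]
        simp only [sh]
        split_ifs <;> omega
      · exact ⟨(sh_lt _ _ _).2 h0, Or.inl ⟨i, j, hij, rfl, rfl⟩⟩

lemma contains_iff {n : ℕ} (π : Equiv.Perm (Fin n)) (σ : Fin 4 → Fin 4) :
    ContainsPattern π σ ↔ ∃ i j k l : Fin n, i < j ∧ j < k ∧ k < l ∧
      ∀ a b : Fin 4, σ a < σ b ↔ π (![i,j,k,l] a) < π (![i,j,k,l] b) := by
  constructor
  · rintro ⟨f, hf⟩
    refine ⟨f 0, f 1, f 2, f 3, f.strictMono (by decide), f.strictMono (by decide), f.strictMono (by decide), ?_⟩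
    have : ![f 0, f 1, f 2, f 3] = f := by
      funext a; fin_cases a <;> rfl
    rw [this]
    exact hf
  · rintro ⟨i, j, k, l, h1, h2, h3, h⟩
    refine ⟨OrderEmbedding.ofStrictMono ![i,j,k,l] ?_, h⟩
    rw [Fin.strictMono_iff_lt_succ]
    intro a
    fin_cases a
    · exact h1
    · exact h2
    · exact h3

lemma avoid_iff {n : ℕ} (π : Equiv.Perm (Fin n)) :
    (∀ σ ∈ ({![0,3,1,2], ![0,1,2,3], ![2,3,0,1]} : Set (Fin 4 → Fin 4)), ¬ ContainsPattern π σ) ↔ ¬ Bad π := by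
  have key : ∀ i j k l : Fin n, Pat (π i) (π j) (π k) (π l) ↔
      ((∀ a b : Fin 4, (![0,3,1,2] : Fin 4 → Fin 4) a < (![0,3,1,2] : Fin 4 → Fin 4) b ↔ π (![i,j,k,l] a) < π (![i,j,k,l] b)) ∨
      (∀ a b : Fin 4, (![0,1,2,3] : Fin 4 → Fin 4) a < (![0,1,2,3] : Fin 4 → Fin 4) b ↔ π (![i,j,k,l] a) < π (![i,j,k,l] b)) ∨
      (∀ a b : Fin 4, (![2,3,0,1] : Fin 4 → Fin 4) a < (![2,3,0,1] : Fin 4 → Fin 4) b ↔ π (![i,j,k,l] a) < π (![i,j,k,l] b))) := by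
    intro i j k l
    constructor
    · rintro (h | h | h)
      · refine Or.inl (fun a b => ?_)
        obtain ⟨h1, h2, h3⟩ := h
        fin_cases a <;> fin_cases b <;> simp [-Fin.val_fin_lt, Fin.lt_def] <;> omega
      · refine Or.inr (Or.inl (fun a b => ?_))
        obtain ⟨h1, h2, h3⟩ := h
        fin_cases a <;> fin_cases b <;> simp [-Fin.val_fin_lt, Fin.lt_def] <;> omega
      · refine Or.inr (Or.inr (fun a b => ?_))
        obtain ⟨h1, h2, h3⟩ := h
        fin_cases a <;> fin_cases b <;> simp [-Fin.val_fin_lt, Fin.lt_def] <;> omega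
    · rintro (h | h | h)
      · exact Or.inl ⟨(h 0 2).1 (by decide), (h 2 3).1 (by decide), (h 3 1).1 (by decide)⟩
      · exact Or.inr (Or.inl ⟨(h 0 1).1 (by decide), (h 1 2).1 (by decide), (h 2 3).1 (by decide)⟩)
      · exact Or.inr (Or.inr ⟨(h 2 3).1 (by decide), (h 3 0).1 (by decide), (h 0 1).1 (by decide)⟩)
  simp only [Set.mem_insert_iff, Set.mem_singleton_iff, forall_eq_or_imp, forall_eq, contains_iff, Bad, key]
  constructor
  · rintro ⟨h1, h2, h3⟩ ⟨i, j, k, l, e1, e2, e3, h | h | h⟩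
    · exact h1 ⟨i, j, k, l, e1, e2, e3, h⟩
    · exact h2 ⟨i, j, k, l, e1, e2, e3, h⟩
    · exact h3 ⟨i, j, k, l, e1, e2, e3, h⟩
  · intro hb
    refine ⟨?_, ?_, ?_⟩
    · rintro ⟨i, j, k, l, e1, e2, e3, h⟩
      exact hb ⟨i, j, k, l, e1, e2, e3, Or.inl h⟩
    · rintro ⟨i, j, k, l, e1, e2, e3, h⟩
      exact hb ⟨i, j, k, l, e1, e2, e3, Or.inr (Or.inl h)⟩
    · rintro ⟨i, j, k, l, e1, e2, e3, h⟩
      exact hb ⟨i, j, k, l, e1, e2, e3, Or.inr (Or.inr h)⟩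

open Classical in
lemma cnt_sum (m : ℕ) : ∀ n : ℕ, (∑ π : Equiv.Perm (Fin n), if Bad π then 0 else (conf π).cnt m) =
    ∑ π : Equiv.Perm (Fin (n+m)), if Bad π then 0 else 1 := by
  induction m with
  | zero => intro n; simp [Cfg.cnt]
  | succ m ih =>
    intro n
    rw [show n + (m+1) = (n+1)+m by ring, ← ih (n+1)]
    rw [← (Equiv.ofBijective _ (ins_bij n)).sum_comp, Fintype.sum_prod_type_right]
    apply Finset.sum_congr rfl
    intro π _
    simp only [Equiv.ofBijective_apply, bad_ins, conf_ins]
    by_cases hb : Bad π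
    · simp [hb]
    · simp only [hb, if_false, false_or, Cfg.cnt, Cfg.act]
      rw [Finset.sum_filter, Finset.sum_range]
      apply Finset.sum_congr rfl
      intro v _
      by_cases hk : (conf π).K v <;> simp [hk]

lemma avoiderCount_eq (n : ℕ) : avoiderCount ({![0,3,1,2], ![0,1,2,3], ![2,3,0,1]} : Set (Fin 4 → Fin 4)) n =
    (conf (1 : Equiv.Perm (Fin 0))).cnt n := by
  classical
  have h := cnt_sum n 0
  rw [Fintype.sum_unique] at h
  have hb : ¬ Bad (default : Equiv.Perm (Fin 0)) := by
    rintro ⟨i, _⟩; exact i.elim0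
  rw [if_neg hb] at h
  rw [show (1 : Equiv.Perm (Fin 0)) = default from Subsingleton.elim _ _, h]
  unfold avoiderCount
  simp only [avoid_iff]
  rw [zero_add, Nat.card_eq_fintype_card, Fintype.card_subtype, Finset.card_filter]
  apply Finset.sum_congr rfl
  intro π _
  by_cases hb : Bad π <;> simp [hb]

lemma conf_D : (conf (1 : Equiv.Perm (Fin 0))).D := by
  constructor
  · intro s hs
    simp only [Cfg.act, Finset.mem_filter, Finset.mem_range]
    refine ⟨by omega, ?_⟩
    rintro ⟨i, _⟩
    exact i.elim0
  · rintro a b ⟨_, i, _⟩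
    exact i.elim0

end

end S4

theorem statement_4 :
    ((1 : PowerSeries ℚ) - X)^7 * (1 - 2*X)^3 * avoiderGF ({![0,3,1,2], ![0,1,2,3], ![2,3,0,1]} : Set (Fin 4 → Fin 4)) =
      1 - 12*X + 64*X^2 - 198*X^3 + 393*X^4 - 521*X^5 + 463*X^6 - 269*X^7 + 95*X^8 - 17*X^9 := by
  obtain ⟨u, hu⟩ : ∃ u : PowerSeries ℚ, u * (1 - X) = 1 :=
    ⟨(1 - X)⁻¹, PowerSeries.inv_mul_cancel _ (by simp)⟩
  obtain ⟨w, hw⟩ : ∃ w : PowerSeries ℚ, w * (1 - 2 * X) = 1 :=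
    ⟨(1 - 2 * X)⁻¹, PowerSeries.inv_mul_cancel _ (by simp)⟩
  have h : avoiderGF ({![0,3,1,2], ![0,1,2,3], ![2,3,0,1]} : Set (Fin 4 → Fin 4)) =
      S4.gD X u w 0 := by
    ext n
    rw [avoiderGF, PowerSeries.coeff_mk, S4.avoiderCount_eq]
    exact (S4.cnt_main u w hu hw n _ (S4.conf_WF _)).2.2.2.2 S4.conf_D
  rw [h]
  exact S4.relFinal hu hw
end

section
/- Let T = {1342, 3124, 3412} (patterns of length 4). Then the generating function for T-avoiders satisfies, as formal power series over ℚ, (1-x)^4·(1-2x)·(1-4x+2x^2)·F_T(x) = 1 - 9x + 32x^2 - 58x^3 + 58x^4 - 33x^5 + 8x^6; that is, F_T(x) = (1-9x+32x^2-58x^3+58x^4-33x^5+8x^6)/((1-x)^4(1-2x)(1-4x+2x^2)). -/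
open PowerSeries

namespace PF
set_option linter.unusedSimpArgs false

def sh (w x : ℕ) : ℕ := if x < w then x else x + 1

def insR (n w : ℕ) (R : ℕ → ℕ → Prop) : ℕ → ℕ → Prop := fun p q =>
  (p = w ∧ ∃ q', q' < n ∧ q = sh w q') ∨ ∃ p' q', R p' q' ∧ p = sh w p' ∧ q = sh w q'

structure WF (n : ℕ) (R : ℕ → ℕ → Prop) : Prop where
  bd : ∀ p q, R p q → p < n ∧ q < n
  tot : ∀ p q, p < n → q < n → p ≠ q → R p q ∨ R q p

structure act (R : ℕ → ℕ → Prop) (v : ℕ) : Prop where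
  h1 : ∀ x y z, R x y → R y z → v ≤ z → z < x → x < y → False
  h2 : ∀ p q t, R p q → R t p → p < q → q < v → v ≤ t → False
  h3 : ∀ p q t, R p q → R q t → p < q → q < v → v ≤ t → False

structure Av (R : ℕ → ℕ → Prop) : Prop where
  h1 : ∀ a b c d, R a b → R b c → R c d → a < d → d < b → b < c → False
  h2 : ∀ a b c d, R a b → R b c → R c d → b < c → c < a → a < d → False
  h3 : ∀ a b c d, R a b → R b c → R c d → c < d → d < a → a < b → False

theorem ins_old {n w R} {p q : ℕ} : insR n w R (sh w p) (sh w q) ↔ R p q := by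
  constructor
  · rintro (⟨h, -⟩ | ⟨p', q', h, h1, h2⟩)
    · unfold sh at h; split_ifs at h <;> omega
    · have : p = p' := by unfold sh at h1; split_ifs at h1 <;> omega
      have : q = q' := by unfold sh at h2; split_ifs at h2 <;> omega
      subst_vars; exact h
  · intro h; exact Or.inr ⟨p, q, h, rfl, rfl⟩

theorem ins_new {n w R} {q : ℕ} (h : q < n) : insR n w R w (sh w q) := Or.inl ⟨rfl, q, h, rfl⟩

theorem ins_not {n w R} {p : ℕ} : ¬ insR n w R p w := by
  rintro (⟨_, q, _, h⟩ | ⟨p', q, h, h1, h⟩) <;>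
  · unfold sh at h; split_ifs at h <;> omega

theorem ins_lt {n w R} {p q : ℕ} (hw : WF n R) (hn : w ≤ n) (h : insR n w R p q) :
    p < n + 1 ∧ q < n + 1 := by
  rcases h with ⟨h, q', h1, h2⟩ | ⟨p', q', h, h1, h2⟩
  · unfold sh at h2; split_ifs at h2 <;> omega
  · have := hw.bd _ _ h
    unfold sh at h1 h2; split_ifs at h1 h2 <;> omega

theorem sh_cases (w x : ℕ) : x = w ∨ ∃ y, x = sh w y := by
  rcases lt_trichotomy x w with h | h | h
  · right; exact ⟨x, by simp [sh, h]⟩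
  · left; exact h
  · right; exact ⟨x - 1, by unfold sh; split_ifs <;> omega⟩

theorem sh_lt {w p q : ℕ} : sh w p < sh w q ↔ p < q := by
  unfold sh; split_ifs <;> omega
theorem w_lt {w p : ℕ} : w < sh w p ↔ w ≤ p := by
  unfold sh; split_ifs <;> omega
theorem lt_w {w p : ℕ} : sh w p < w ↔ p < w := by
  unfold sh; split_ifs <;> omega

theorem WF.ins {n w R} (hw : WF n R) (hn : w ≤ n) : WF (n + 1) (insR n w R) := by
  refine ⟨fun p q h => ins_lt hw hn h, ?_⟩
  intro p q hp hq hne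
  rcases sh_cases w p with hp | ⟨p, rfl⟩ <;> rcases sh_cases w q with hq | ⟨q, rfl⟩
  all_goals subst_vars
  · exact absurd rfl hne
  · left; apply ins_new; unfold sh at hq; split_ifs at hq <;> omega
  · right; apply ins_new; unfold sh at hp; split_ifs at hp <;> omega
  · rw [ins_old, ins_old]; apply hw.tot
    · unfold sh at hp; split_ifs at hp <;> omega
    · unfold sh at hq; split_ifs at hq <;> omega
    · rintro rfl; exact hne rfl

theorem Av_ins {n w R} (hw : WF n R) : Av (insR n w R) ↔ Av R ∧ act R w := by
  constructor
  · rintro ⟨h1, h2, h3⟩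
    refine ⟨⟨?_, ?_, ?_⟩, ⟨?_, ?_, ?_⟩⟩
    · intro a b c d r1 r2 r3 i1 i2 i3
      exact h1 _ _ _ _ (ins_old.2 r1) (ins_old.2 r2) (ins_old.2 r3) (sh_lt.2 i1) (sh_lt.2 i2) (sh_lt.2 i3)
    · intro a b c d r1 r2 r3 i1 i2 i3
      exact h2 _ _ _ _ (ins_old.2 r1) (ins_old.2 r2) (ins_old.2 r3) (sh_lt.2 i1) (sh_lt.2 i2) (sh_lt.2 i3)
    · intro a b c d r1 r2 r3 i1 i2 i3
      exact h3 _ _ _ _ (ins_old.2 r1) (ins_old.2 r2) (ins_old.2 r3) (sh_lt.2 i1) (sh_lt.2 i2) (sh_lt.2 i3)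
    · intro x y z r1 r2 i1 i2 i3
      exact h1 _ _ _ _ (ins_new (hw.bd _ _ r1).1) (ins_old.2 r1) (ins_old.2 r2) (w_lt.2 i1) (sh_lt.2 i2) (sh_lt.2 i3)
    · intro p q t r1 r2 i1 i2 i3
      exact h3 _ _ _ _ (ins_new (hw.bd _ _ r2).1) (ins_old.2 r2) (ins_old.2 r1) (sh_lt.2 i1) (lt_w.2 i2) (w_lt.2 i3)
    · intro p q t r1 r2 i1 i2 i3
      exact h2 _ _ _ _ (ins_new (hw.bd _ _ r1).1) (ins_old.2 r1) (ins_old.2 r2) (sh_lt.2 i1) (lt_w.2 i2) (w_lt.2 i3)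
  · rintro ⟨⟨h1, h2, h3⟩, ⟨k1, k2, k3⟩⟩
    refine ⟨?_, ?_, ?_⟩ <;> intro a b c d r1 r2 r3 i1 i2 i3 <;>
    rcases sh_cases w b with hb | ⟨b, rfl⟩ <;> rcases sh_cases w c with hc | ⟨c, rfl⟩ <;>
      rcases sh_cases w d with hd | ⟨d, rfl⟩ <;> rcases sh_cases w a with ha | ⟨a, rfl⟩ <;>
      subst_vars <;> first
      | exact ins_not r1
      | exact ins_not r2
      | exact ins_not r3
      | (simp only [ins_old, sh_lt, lt_w, w_lt] at *
         first
         | exact h1 _ _ _ _ r1 r2 r3 i1 i2 i3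
         | exact h2 _ _ _ _ r1 r2 r3 i1 i2 i3
         | exact h3 _ _ _ _ r1 r2 r3 i1 i2 i3
         | exact k1 _ _ _ r2 r3 i1 i2 i3
         | exact k2 _ _ _ r3 r2 i1 i2 i3
         | exact k3 _ _ _ r2 r3 i1 i2 i3)

theorem sh_lt_lo {w p g : ℕ} (h : g ≤ w) : sh w p < g ↔ p < g := by
  unfold sh; split_ifs <;> omega
theorem sh_lt_hi {w p g : ℕ} (h : w < g) : sh w p < g ↔ p < g - 1 := by
  unfold sh; split_ifs <;> omega
theorem le_sh_lo {w p g : ℕ} (h : g ≤ w) : g ≤ sh w p ↔ g ≤ p := by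
  unfold sh; split_ifs <;> omega
theorem le_sh_hi {w p g : ℕ} (h : w < g) : g ≤ sh w p ↔ g - 1 ≤ p := by
  unfold sh; split_ifs <;> omega

theorem act_lo {n w g R} (hw : WF n R) (hg : g ≤ w) : act (insR n w R) g ↔
    act R g ∧ (∀ p q, R p q → p < q → q < g → False) ∧
      (∀ b c, R b c → w ≤ b → c < w → g ≤ c → False) := by
  constructor
  · rintro ⟨h1, h2, h3⟩
    refine ⟨⟨?_, ?_, ?_⟩, ?_, ?_⟩
    · intro x y z r1 r2 i1 i2 i3
      exact h1 _ _ _ (ins_old.2 r1) (ins_old.2 r2) ((le_sh_lo hg).2 i1) (sh_lt.2 i2) (sh_lt.2 i3)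
    · intro x y z r1 r2 i1 i2 i3
      exact h2 _ _ _ (ins_old.2 r1) (ins_old.2 r2) (sh_lt.2 i1) ((sh_lt_lo hg).2 i2) ((le_sh_lo hg).2 i3)
    · intro x y z r1 r2 i1 i2 i3
      exact h3 _ _ _ (ins_old.2 r1) (ins_old.2 r2) (sh_lt.2 i1) ((sh_lt_lo hg).2 i2) ((le_sh_lo hg).2 i3)
    · intro p q r i1 i2
      exact h2 _ _ _ (ins_old.2 r) (ins_new (hw.bd _ _ r).1) (sh_lt.2 i1) ((sh_lt_lo hg).2 i2) hg
    · intro b c r i1 i2 i3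
      exact h1 _ _ _ (ins_new (hw.bd _ _ r).1) (ins_old.2 r) ((le_sh_lo hg).2 i3) (lt_w.2 i2) (w_lt.2 i1)
  · rintro ⟨⟨h1, h2, h3⟩, k1, k2⟩
    refine ⟨?_, ?_, ?_⟩ <;> intro a b c r1 r2 i1 i2 i3 <;>
    rcases sh_cases w b with hb | ⟨b, rfl⟩ <;> rcases sh_cases w c with hc | ⟨c, rfl⟩ <;>
      rcases sh_cases w a with ha | ⟨a, rfl⟩ <;>
      subst_vars <;> first
      | exact ins_not r1
      | exact ins_not r2
      | omega
      | (simp only [ins_old, sh_lt, lt_w, w_lt, sh_lt_lo hg, le_sh_lo hg] at *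
         first
         | exact h1 _ _ _ r1 r2 i1 i2 i3
         | exact h2 _ _ _ r1 r2 i1 i2 i3
         | exact h3 _ _ _ r1 r2 i1 i2 i3
         | exact k1 _ _ r1 i1 i2
         | exact k2 _ _ r2 i3 i2 i1
         | omega)

theorem act_hi {n w g R} (hw : WF n R) (hg : w < g) : act (insR n w R) g ↔
    act R (g - 1) ∧ (∀ p q, R p q → w ≤ p → p < g - 1 → g - 1 ≤ q → False) := by
  constructor
  · rintro ⟨h1, h2, h3⟩
    refine ⟨⟨?_, ?_, ?_⟩, ?_⟩
    · intro x y z r1 r2 i1 i2 i3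
      exact h1 _ _ _ (ins_old.2 r1) (ins_old.2 r2) ((le_sh_hi hg).2 i1) (sh_lt.2 i2) (sh_lt.2 i3)
    · intro x y z r1 r2 i1 i2 i3
      exact h2 _ _ _ (ins_old.2 r1) (ins_old.2 r2) (sh_lt.2 i1) ((sh_lt_hi hg).2 i2) ((le_sh_hi hg).2 i3)
    · intro x y z r1 r2 i1 i2 i3
      exact h3 _ _ _ (ins_old.2 r1) (ins_old.2 r2) (sh_lt.2 i1) ((sh_lt_hi hg).2 i2) ((le_sh_hi hg).2 i3)
    · intro p q r i1 i2 i3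
      exact h3 _ _ _ (ins_new (hw.bd _ _ r).1) (ins_old.2 r) (w_lt.2 i1) ((sh_lt_hi hg).2 i2) ((le_sh_hi hg).2 i3)
  · rintro ⟨⟨h1, h2, h3⟩, k1⟩
    refine ⟨?_, ?_, ?_⟩ <;> intro a b c r1 r2 i1 i2 i3 <;>
    rcases sh_cases w b with hb | ⟨b, rfl⟩ <;> rcases sh_cases w c with hc | ⟨c, rfl⟩ <;>
      rcases sh_cases w a with ha | ⟨a, rfl⟩ <;>
      subst_vars <;> first
      | exact ins_not r1
      | exact ins_not r2
      | omega
      | (simp only [ins_old, sh_lt, lt_w, w_lt, sh_lt_hi hg, le_sh_hi hg] at *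
         first
         | exact h1 _ _ _ r1 r2 i1 i2 i3
         | exact h2 _ _ _ r1 r2 i1 i2 i3
         | exact h3 _ _ _ r1 r2 i1 i2 i3
         | exact k1 _ _ r2 i1 i2 i3
         | omega)

end PF

namespace PF

theorem ins_of {n w R} {p q p' q' : ℕ} (r : R p q) (hp : p' = sh w p) (hq : q' = sh w q) :
    insR n w R p' q' := by
  subst hp hq; exact ins_old.2 r

theorem ins_first {n w R} {q : ℕ} (h : q ≠ w) (hq : q ≤ n) (hn : w ≤ n) : insR n w R w q := by
  rcases sh_cases w q with h' | ⟨y, rfl⟩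
  · exact absurd h' h
  · apply ins_new; unfold sh at hq; split_ifs at hq <;> omega

theorem ins_elim {n w R} {p q : ℕ} (h : insR n w R p q) :
    (p = w ∧ q ≠ w) ∨ ∃ p' q', R p' q' ∧ (p' < w ∧ p = p' ∨ w ≤ p' ∧ p = p' + 1) ∧
      (q' < w ∧ q = q' ∨ w ≤ q' ∧ q = q' + 1) := by
  rcases h with ⟨h, q', h1, h2⟩ | ⟨p', q', h, h1, h2⟩
  · left; unfold sh at h2; split_ifs at h2 <;> omega
  · right; refine ⟨p', q', h, ?_, ?_⟩
    · unfold sh at h1; split_ifs at h1 <;> omega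
    · unfold sh at h2; split_ifs at h2 <;> omega

theorem act_top {n R} (hw : WF n R) : act R n := by
  refine ⟨?_, ?_, ?_⟩
  · intro x y z r1 r2 i1; have := hw.bd _ _ r2; omega
  · intro x y z r1 r2 i1 i2 i3; have := hw.bd _ _ r2; omega
  · intro x y z r1 r2 i1 i2 i3; have := hw.bd _ _ r2; omega

structure Base (n : ℕ) (R : ℕ → ℕ → Prop) (e d j : ℕ) : Prop where
  wf : WF n R
  dn : d < n
  ej : e + j ≤ d
  lo : ∀ v, v ≤ d → (act R v ↔ e ≤ v)
  na : ∀ p q, R p q → p < q → q < d → False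
  ap : ∃ p, p < d ∧ R p d
  up : ∀ w g, e ≤ w → w < d → w < g → g < n → act R g → ∃ q, g ≤ q ∧ R w q
  ds : ∀ c, c < d → ((∃ b, d ≤ b ∧ R b c) ↔ c + j < d)

structure G (n : ℕ) (R : ℕ → ℕ → Prop) (e d j : ℕ) : Prop extends Base n R e d j where
  hi : ∀ v, d < v → v < n → ¬ act R v

structure S1 (n : ℕ) (R : ℕ → ℕ → Prop) (e d j : ℕ) : Prop extends Base n R e d j where
  eq : e + j = d
  hi : ∀ v, d < v → v ≤ n → act R v
  nd : ∀ p q, R p q → p < q → d ≤ p → False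

structure S2 (n : ℕ) (R : ℕ → ℕ → Prop) (u : ℕ) : Prop where
  wf : WF n R
  un : u ≤ n
  ac : ∀ v, v ≤ n → (act R v ↔ n ≤ v + u)
  ap : ∃ p q, R p q ∧ p < q ∧ q + u < n
  nd : ∀ p q, R p q → p < q → n ≤ p + u → False

structure Dec (n : ℕ) (R : ℕ → ℕ → Prop) : Prop where
  wf : WF n R
  nd : ∀ p q, R p q → p < q → False

theorem base_top {n R e d j} (h : Base n R e d j) : G (n+1) (insR n n R) e d 0 := by
  have hw := h.wf
  have dn := h.dn
  have ej := h.ej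
  obtain ⟨p0, hp0, r0⟩ := h.ap
  have dead : ∀ v, d < v → v < n + 1 → ¬ act (insR n n R) v := by
    intro v hv hv' ha
    rw [act_lo hw (by omega)] at ha
    exact ha.2.1 _ _ r0 hp0 (by omega)
  refine ⟨⟨hw.ins le_rfl, by omega, by omega, ?_, ?_, ?_, ?_, ?_⟩, dead⟩
  · intro v hv
    rw [act_lo hw (by omega), h.lo v hv]
    constructor
    · exact fun h => h.1
    · intro he
      refine ⟨he, fun p q r i1 i2 => h.na p q r i1 (by omega), ?_⟩
      intro b c r i1 i2 i3
      have := hw.bd _ _ r; omega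
  · intro p q r i1 i2
    rcases ins_elim r with ⟨h1, h2⟩ | ⟨p', q', r', h1, h2⟩
    · omega
    · have := hw.bd _ _ r'
      exact h.na p' q' r' (by omega) (by omega)
  · exact ⟨p0, hp0, ins_of r0 (by unfold sh; split_ifs <;> omega) (by unfold sh; split_ifs <;> omega)⟩
  · intro w g i1 i2 i3 i4 ha
    by_cases hg : d < g
    · exact absurd ha (dead g hg i4)
    · rw [act_lo hw (by omega)] at ha
      obtain ⟨q, hq, r⟩ := h.up w g i1 i2 i3 (by omega) ha.1
      have := hw.bd _ _ r
      exact ⟨q, hq, ins_of r (by unfold sh; split_ifs <;> omega) (by unfold sh; split_ifs <;> omega)⟩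
  · intro c hc
    refine ⟨fun _ => by omega, fun _ => ⟨n, by omega, ins_first (by omega) (by omega) le_rfl⟩⟩

theorem base_mid {n R e d j w} (h : Base n R e d j) (h1 : e ≤ w) (h2 : w < d) :
    G (n+1) (insR n w R) w (w+1) 1 := by
  have hw := h.wf
  have dn := h.dn
  have ej := h.ej
  have key : 0 < w → R w (w-1) := by
    intro h0
    rcases hw.tot w (w-1) (by omega) (by omega) (by omega) with r | r
    · exact r
    · exact (h.na _ _ r (by omega) (by omega)).elim
  refine ⟨⟨hw.ins (by omega), by omega, by omega, ?_, ?_, ?_, ?_, ?_⟩, ?_⟩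
  · intro v hv
    rcases Nat.lt_or_ge w v with hv' | hv'
    · rw [act_hi hw hv']
      have : v - 1 = w := by omega
      rw [this, h.lo w (by omega)]
      refine ⟨fun _ => by omega, fun _ => ⟨h1, fun p q r i1 i2 => by omega⟩⟩
    · rw [act_lo hw hv', h.lo v (by omega)]
      constructor
      · intro ⟨k1, k2, k3⟩
        by_contra hc
        exact k3 _ _ (key (by omega)) le_rfl (by omega) (by omega)
      · intro k
        refine ⟨by omega, fun p q r i1 i2 => h.na p q r i1 (by omega), fun b c r i1 i2 i3 => by omega⟩
  · intro p q r i1 i2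
    rcases ins_elim r with ⟨h1, h2⟩ | ⟨p', q', r', h1, h2⟩
    · omega
    · exact h.na p' q' r' (by omega) (by omega)
  · exact ⟨w, by omega, ins_first (by omega) (by omega) (by omega)⟩
  · intro w' g i1 i2 i3 i4 ha
    have : w' = w := by omega
    subst this
    exact ⟨n, by omega, ins_first (by omega) (by omega) (by omega)⟩
  · intro c hc
    constructor
    · rintro ⟨b, hb, r⟩
      rcases ins_elim r with ⟨h1, h2⟩ | ⟨p', q', r', h1, h2⟩ <;> omega
    · intro hc'
      rcases hw.tot w c (by omega) (by omega) (by omega) with r | r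
      · exact ⟨w+1, by omega, ins_of r (by unfold sh; split_ifs <;> omega) (by unfold sh; split_ifs <;> omega)⟩
      · exact (h.na _ _ r (by omega) (by omega)).elim
  · intro v hv hv' ha
    rw [act_hi hw (by omega)] at ha
    obtain ⟨q, hq, r⟩ := h.up w (v-1) h1 h2 (by omega) (by omega) ha.1
    exact ha.2 _ _ r le_rfl (by omega) hq

theorem base_last {n R e d j} (h : Base n R e d j) :
    Base (n+1) (insR n d R) (d-j) (d+1) (j+1) := by
  have hw := h.wf
  have dn := h.dn
  have ej := h.ej
  refine ⟨hw.ins (by omega), by omega, by omega, ?_, ?_, ?_, ?_, ?_⟩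
  · intro v hv
    rcases Nat.lt_or_ge d v with hv' | hv'
    · rw [act_hi hw hv']
      have : v - 1 = d := by omega
      rw [this, h.lo d (by omega)]
      refine ⟨fun _ => by omega, fun _ => ⟨by omega, fun p q r i1 i2 => by omega⟩⟩
    · rw [act_lo hw hv', h.lo v (by omega)]
      constructor
      · intro ⟨k1, k2, k3⟩
        by_contra hc
        obtain ⟨b, hb, r⟩ := (h.ds v (by omega)).2 (by omega)
        exact k3 _ _ r hb (by omega) (by omega)
      · intro k
        refine ⟨by omega, fun p q r i1 i2 => h.na p q r i1 (by omega), fun b c r i1 i2 i3 => ?_⟩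
        have := (h.ds c i2).1 ⟨b, i1, r⟩
        omega
  · intro p q r i1 i2
    rcases ins_elim r with ⟨h1, h2⟩ | ⟨p', q', r', h1, h2⟩
    · omega
    · exact h.na p' q' r' (by omega) (by omega)
  · exact ⟨d, by omega, ins_first (by omega) (by omega) (by omega)⟩
  · intro w' g i1 i2 i3 i4 ha
    rcases Nat.lt_or_ge w' d with hlt | hge
    · rcases Nat.lt_or_ge d g with hv' | hv'
      · rw [act_hi hw hv'] at ha
        obtain ⟨q, hq, r⟩ := h.up w' (g-1) (by omega) hlt (by omega) (by omega) ha.1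
        exact ⟨q+1, by omega, ins_of r (by unfold sh; split_ifs <;> omega) (by unfold sh; split_ifs <;> omega)⟩
      · rw [act_lo hw hv'] at ha
        obtain ⟨q, hq, r⟩ := h.up w' g (by omega) hlt (by omega) (by omega) ha.1
        exact ⟨sh d q, by unfold sh; split_ifs <;> omega, ins_of r (by unfold sh; split_ifs <;> omega) rfl⟩
    · have : w' = d := by omega
      subst this
      exact ⟨n, by omega, ins_first (by omega) (by omega) (by omega)⟩
  · intro c hc
    constructor
    · rintro ⟨b, hb, r⟩
      rcases ins_elim r with ⟨h1, h2⟩ | ⟨p', q', r', h1, h2⟩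
      · omega
      · have := (h.ds q' (by omega)).1 ⟨p', by omega, r'⟩
        omega
    · intro hc'
      obtain ⟨b, hb, r⟩ := (h.ds c (by omega)).2 (by omega)
      exact ⟨b+1, by omega, ins_of r (by unfold sh; split_ifs <;> omega) (by unfold sh; split_ifs <;> omega)⟩

theorem G_last {n R e d j} (h : G n R e d j) : G (n+1) (insR n d R) (d-j) (d+1) (j+1) := by
  refine ⟨base_last h.toBase, ?_⟩
  intro v hv hv' ha
  rw [act_hi h.wf (by omega)] at ha
  exact h.hi (v-1) (by omega) (by omega) ha.1

theorem S1_last {n R e d j} (h : S1 n R e d j) : S1 (n+1) (insR n d R) e (d+1) (j+1) := by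
  have eq := h.eq
  have dn := h.dn
  have hb := base_last h.toBase
  rw [show d - j = e by omega] at hb
  refine ⟨hb, by omega, ?_, ?_⟩
  · intro v hv hv'
    rw [act_hi h.wf (by omega)]
    refine ⟨?_, fun p q r i1 i2 i3 => h.nd p q r (by omega) (by omega)⟩
    exact h.hi (v-1) (by omega) (by omega)
  · intro p q r i1 i2
    rcases ins_elim r with ⟨h1, h2⟩ | ⟨p', q', r', h1, h2⟩
    · omega
    · exact h.nd p' q' r' (by omega) (by omega)

theorem S1_hi {n R e d j w} (h : S1 n R e d j) (h1 : d < w) (h2 : w < n) :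
    S2 (n+1) (insR n w R) (n-w) := by
  have hw := h.wf
  obtain ⟨p0, hp0, r0⟩ := h.ap
  refine ⟨hw.ins (by omega), by omega, ?_, ?_, ?_⟩
  · intro v hv
    rcases Nat.lt_or_ge w v with hv' | hv'
    · rw [act_hi hw hv']
      refine ⟨fun _ => by omega, fun _ => ⟨h.hi _ (by omega) (by omega), fun p q r i1 i2 i3 => h.nd p q r (by omega) (by omega)⟩⟩
    · rw [act_lo hw hv']
      constructor
      · intro ⟨k1, k2, k3⟩
        rcases Nat.lt_or_ge d v with hd | hd
        · exact (k2 _ _ r0 hp0 hd).elim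
        · rcases hw.tot w d (by omega) (by omega) (by omega) with r | r
          · exact (k3 _ _ r le_rfl h1 hd).elim
          · exact (h.nd _ _ r h1 le_rfl).elim
      · intro k; omega
  · exact ⟨p0, d, ins_of r0 (by unfold sh; split_ifs <;> omega) (by unfold sh; split_ifs <;> omega), by omega, by omega⟩
  · intro p q r i1 i2
    rcases ins_elim r with ⟨h1, h2⟩ | ⟨p', q', r', h1, h2⟩
    · omega
    · exact h.nd p' q' r' (by omega) (by omega)

theorem S2_ins {n R u w} (h : S2 n R u) (h1 : n ≤ w + u) (h2 : w ≤ n) :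
    S2 (n+1) (insR n w R) (n-w) := by
  have hw := h.wf
  obtain ⟨p0, q0, r0, hp0, hq0⟩ := h.ap
  refine ⟨hw.ins (by omega), by omega, ?_, ?_, ?_⟩
  · intro v hv
    rcases Nat.lt_or_ge w v with hv' | hv'
    · rw [act_hi hw hv', h.ac _ (by omega)]
      refine ⟨fun _ => by omega, fun _ => ⟨by omega, fun p q r i1 i2 i3 => h.nd p q r (by omega) (by omega)⟩⟩
    · rw [act_lo hw hv', h.ac _ (by omega)]
      constructor
      · intro ⟨k1, k2, k3⟩
        exact (k2 _ _ r0 hp0 (by omega)).elim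
      · intro k; omega
  · exact ⟨p0, q0, ins_of r0 (by unfold sh; split_ifs <;> omega) (by unfold sh; split_ifs <;> omega), by omega, by omega⟩
  · intro p q r i1 i2
    rcases ins_elim r with ⟨h1, h2⟩ | ⟨p', q', r', h1, h2⟩
    · omega
    · exact h.nd p' q' r' (by omega) (by omega)

theorem Dec.act {n R} (h : Dec n R) (v : ℕ) : act R v :=
  ⟨fun _ _ _ r _ _ _ i => h.nd _ _ r i, fun _ _ _ r _ i _ _ => h.nd _ _ r i,
    fun _ _ _ r _ i _ _ => h.nd _ _ r i⟩

theorem Dec_top {n R} (h : Dec n R) : Dec (n+1) (insR n n R) := by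
  refine ⟨h.wf.ins le_rfl, ?_⟩
  intro p q r i1
  have := ins_lt h.wf le_rfl r
  rcases ins_elim r with ⟨h1, h2⟩ | ⟨p', q', r', h1, h2⟩
  · omega
  · exact h.nd p' q' r' (by omega)

theorem Dec_lo {n R w} (h : Dec n R) (h1 : w < n) : S1 (n+1) (insR n w R) w (w+1) 1 := by
  have hw := h.wf
  have hl : ∀ p q, q < p → p < n → R p q := by
    intro p q i1 i2
    rcases hw.tot p q (by omega) (by omega) (by omega) with r | r
    · exact r
    · exact (h.nd _ _ r i1).elim
  refine ⟨⟨hw.ins (by omega), by omega, by omega, ?_, ?_, ?_, ?_, ?_⟩, by omega, ?_, ?_⟩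
  · intro v hv
    rcases Nat.lt_or_ge w v with hv' | hv'
    · rw [act_hi hw hv']
      refine ⟨fun _ => by omega, fun _ => ⟨h.act _, fun p q r i1 i2 i3 => h.nd p q r (by omega)⟩⟩
    · rw [act_lo hw hv']
      constructor
      · intro ⟨k1, k2, k3⟩
        by_contra hc
        exact k3 _ _ (hl w (w-1) (by omega) (by omega)) le_rfl (by omega) (by omega)
      · intro k
        exact ⟨h.act _, fun p q r i1 i2 => h.nd p q r i1, fun b c r i1 i2 i3 => by omega⟩
  · intro p q r i1 i2
    rcases ins_elim r with ⟨h1, h2⟩ | ⟨p', q', r', h1, h2⟩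
    · omega
    · exact h.nd p' q' r' (by omega)
  · exact ⟨w, by omega, ins_first (by omega) (by omega) (by omega)⟩
  · intro w' g i1 i2 i3 i4 ha
    have : w' = w := by omega
    subst this
    exact ⟨n, by omega, ins_first (by omega) (by omega) (by omega)⟩
  · intro c hc
    constructor
    · rintro ⟨b, hb, r⟩
      rcases ins_elim r with ⟨h1, h2⟩ | ⟨p', q', r', h1, h2⟩ <;> omega
    · intro hc'
      exact ⟨w+1, by omega, ins_of (hl w c (by omega) (by omega)) (by unfold sh; split_ifs <;> omega) (by unfold sh; split_ifs <;> omega)⟩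
  · intro v hv hv'
    rw [act_hi hw (by omega)]
    exact ⟨h.act _, fun p q r i1 i2 i3 => h.nd p q r (by omega)⟩
  · intro p q r i1 i2
    rcases ins_elim r with ⟨h1, h2⟩ | ⟨p', q', r', h1, h2⟩
    · omega
    · exact h.nd p' q' r' (by omega)

end PF

namespace PF

open Classical in
noncomputable def Cnt : ℕ → ℕ → (ℕ → ℕ → Prop) → ℚ
  | 0, _, _ => 1
  | m+1, n, R => ∑ v ∈ Finset.range (n+1), if act R v then Cnt m (n+1) (insR n v R) else 0

def HB : ℕ → ℚ × ℚ
  | 0 => (0, 0)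
  | m+1 => (1 + 2 * (HB m).1 + (HB m).2, 1 + 2 * (HB m).1 + 2 * (HB m).2)
def sT : ℕ → ℚ
  | 0 => 0
  | m+1 => sT m + 1 + 2 * (HB m).1 + (HB m).2
def sE : ℕ → ℚ
  | 0 => 0
  | m+1 => sE m + sT m + (HB m).1
def sD : ℕ → ℚ
  | 0 => 0
  | m+1 => sD m + sE m + sT m
def sC : ℕ → ℚ
  | 0 => 1
  | m+1 => sC m + sD m - 1

theorem split5 (F : ℕ → ℚ) (e d n : ℕ) (h1 : e ≤ d) (h2 : d < n) :
    ∑ v ∈ Finset.range (n+1), F v = ∑ v ∈ Finset.Ico 0 e, F v + ∑ v ∈ Finset.Ico e d, F v + F d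
      + ∑ v ∈ Finset.Ico (d+1) n, F v + F n := by
  rw [Finset.sum_range_succ, Finset.range_eq_Ico, ← Finset.sum_Ico_consecutive F (Nat.zero_le e) (by omega : e ≤ n),
    ← Finset.sum_Ico_consecutive F h1 h2.le, Finset.sum_eq_sum_Ico_succ_bot h2]
  ring

theorem refl_sum (f : ℕ → ℚ) (t : ℕ) : ∀ a, ∑ v ∈ Finset.Ico a (a+t), f (a+t-v) = ∑ i ∈ Finset.range t, f (i+1) := by
  induction t with
  | zero => intro a; simp
  | succ t ih =>
    intro a
    rw [Finset.sum_eq_sum_Ico_succ_bot (by omega), Finset.sum_range_succ, ← ih (a+1)]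
    rw [show a + (t+1) - a = t + 1 by omega, show a + (t+1) = a + 1 + t by omega]
    ring

theorem hockey (m t : ℕ) : ∑ i ∈ Finset.range t, ((i + 1 + m).choose m : ℚ) = ((t + m + 1).choose (m+1) : ℚ) - 1 := by
  induction t with
  | zero => simp
  | succ t ih =>
    rw [Finset.sum_range_succ, ih, show t + 1 + m + 1 = (t + m + 1) + 1 by ring, Nat.choose_succ_succ (t+m+1) m]
    rw [show t + 1 + m = t + m + 1 by ring]; push_cast; ring

theorem hock (m n a : ℕ) (h : a ≤ n) : ∑ v ∈ Finset.Ico a n, ((n - v + m).choose m : ℚ) = ((n - a + m + 1).choose (m+1) : ℚ) - 1 := by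
  have := refl_sum (fun i => ((i + m).choose m : ℚ)) (n - a) a
  rw [show a + (n - a) = n by omega] at this
  rw [this, hockey]

theorem cnt_G (m : ℕ) : ∀ n R e d j, G n R e d j →
    Cnt m n R = 1 + ((d : ℚ) + 1 - e) * (HB m).1 + j * ((HB m).2 - (HB m).1) := by
  induction m with
  | zero => intro n R e d j h; simp [Cnt, HB]
  | succ m ih =>
    intro n R e d j h
    have dn := h.dn
    have ej := h.ej
    rw [Cnt, split5 _ e d n (by omega) dn]
    rw [Finset.sum_eq_zero (s := Finset.Ico 0 e), Finset.sum_eq_zero (s := Finset.Ico (d+1) n)]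
    rotate_left
    · intro v hv
      rw [Finset.mem_Ico] at hv
      rw [if_neg (h.hi v (by omega) (by omega))]
    · intro v hv
      rw [Finset.mem_Ico] at hv
      rw [if_neg]
      rw [h.lo v (by omega)]; omega
    rw [if_pos (act_top h.wf), if_pos ((h.lo d le_rfl).2 (by omega))]
    rw [ih _ _ _ _ _ (base_top h.toBase), ih _ _ _ _ _ (G_last h)]
    rw [Finset.sum_congr rfl (g := fun _ => 1 + (HB m).1 + (HB m).2)]
    · rw [Finset.sum_const, Nat.card_Ico, nsmul_eq_mul, Nat.cast_sub (by omega : e ≤ d), Nat.cast_sub (by omega : j ≤ d)]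
      simp only [HB]
      push_cast
      ring
    · intro v hv
      rw [Finset.mem_Ico] at hv
      rw [if_pos ((h.lo v (by omega)).2 (by omega)), ih _ _ _ _ _ (base_mid h.toBase hv.1 hv.2)]
      push_cast; ring

theorem cnt_S2 (m : ℕ) : ∀ n R u, S2 n R u → Cnt m n R = ((u + m).choose m : ℚ) := by
  induction m with
  | zero => intro n R u h; simp [Cnt]
  | succ m ih =>
    intro n R u h
    have un := h.un
    rw [Cnt, Finset.sum_range_succ, Finset.range_eq_Ico, ← Finset.sum_Ico_consecutive _ (Nat.zero_le (n-u)) (by omega : n - u ≤ n)]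
    rw [Finset.sum_eq_zero (s := Finset.Ico 0 (n-u))]
    rotate_left
    · intro v hv
      rw [Finset.mem_Ico] at hv
      rw [if_neg]
      rw [h.ac v (by omega)]; omega
    rw [if_pos (act_top h.wf), ih _ _ _ (S2_ins h (by omega) le_rfl)]
    rw [Finset.sum_congr rfl (g := fun v => ((n - v + m).choose m : ℚ))]
    · rw [hock _ _ _ (by omega), show n - (n - u) = u by omega]
      simp [add_assoc]
    · intro v hv
      rw [Finset.mem_Ico] at hv
      rw [if_pos ((h.ac v (by omega)).2 (by omega)), ih _ _ _ (S2_ins h (by omega) (by omega))]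

theorem cnt_S1 (m : ℕ) : ∀ n R e d j, S1 n R e d j →
    Cnt m n R = sE m + j * sT m + ((n - d + m).choose m : ℚ) := by
  induction m with
  | zero => intro n R e d j h; simp [Cnt, sE, sT]
  | succ m ih =>
    intro n R e d j h
    have dn := h.dn
    have ej := h.eq
    rw [Cnt, split5 _ e d n (by omega) dn]
    rw [Finset.sum_eq_zero (s := Finset.Ico 0 e)]
    rotate_left
    · intro v hv
      rw [Finset.mem_Ico] at hv
      rw [if_neg]
      rw [h.lo v (by omega)]; omega
    rw [if_pos (act_top h.wf), if_pos ((h.lo d le_rfl).2 (by omega))]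
    rw [cnt_G _ _ _ _ _ _ (base_top h.toBase), ih _ _ _ _ _ (S1_last h)]
    rw [Finset.sum_congr (s₁ := Finset.Ico e d) rfl (g := fun _ => 1 + (HB m).1 + (HB m).2)]
    · rw [Finset.sum_congr (s₁ := Finset.Ico (d+1) n) rfl (g := fun v => ((n - v + m).choose m : ℚ))]
      · rw [hock _ _ _ (by omega)]
        rw [Finset.sum_const, Nat.card_Ico, nsmul_eq_mul, show d - e = j by omega]
        have e1 : n - (d+1) + m + 1 = n - d + m := by omega
        have e2 : n + 1 - (d + 1) = n - d := by omega
        have e3 : n - d + (m + 1) = (n - d + m) + 1 := by omega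
        rw [e1, e2, e3, Nat.choose_succ_succ]
        have : (d : ℚ) = e + j := by exact_mod_cast ej.symm
        simp only [sE, sT, this]
        push_cast
        ring
      · intro v hv
        rw [Finset.mem_Ico] at hv
        rw [if_pos (h.hi v (by omega) (by omega)), cnt_S2 _ _ _ _ (S1_hi h (by omega) (by omega))]
    · intro v hv
      rw [Finset.mem_Ico] at hv
      rw [if_pos ((h.lo v (by omega)).2 (by omega)), cnt_G _ _ _ _ _ _ (base_mid h.toBase hv.1 hv.2)]
      push_cast; ring

theorem cnt_D (m : ℕ) : ∀ n R, Dec n R →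
    Cnt m n R = sC m + n * sD m + ∑ k ∈ Finset.range m, ((n + m).choose (k+1) : ℚ) := by
  induction m with
  | zero => intro n R h; simp [Cnt, sC, sD]
  | succ m ih =>
    intro n R h
    rw [Cnt, Finset.sum_range_succ, if_pos (h.act _), ih _ _ (Dec_top h)]
    rw [Finset.sum_congr (s₁ := Finset.range n) rfl (g := fun v => sE m + sT m + ((n - v + m).choose m : ℚ))]
    · rw [Finset.sum_add_distrib, Finset.sum_const, Finset.range_eq_Ico, hock _ _ _ (Nat.zero_le n), Nat.card_Ico, nsmul_eq_mul,
        Finset.sum_range_succ _ m]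
      simp only [Nat.sub_zero, sC, sD]
      rw [show n + 1 + m = n + (m+1) by omega, show n + m + 1 = n + (m+1) by omega]
      push_cast
      ring
    · intro v hv
      rw [Finset.mem_range] at hv
      rw [if_pos (h.act _), cnt_S1 _ _ _ _ _ _ (Dec_lo h hv)]
      rw [show n + 1 - (v + 1) = n - v by omega]
      push_cast; ring

theorem cnt_zero (m : ℕ) (R) (h : Dec 0 R) : Cnt m 0 R = sC m + 2 ^ m - 1 := by
  rw [cnt_D _ _ _ h]
  have := Nat.sum_range_choose m
  rw [Finset.sum_range_succ'] at this
  have h2 : (((∑ k ∈ Finset.range m, m.choose (k + 1)) + m.choose 0 : ℕ) : ℚ) = 2 ^ m := by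
    rw [this]; push_cast; rfl
  push_cast at h2
  simp at h2 ⊢
  linarith

open PowerSeries in
theorem gf (a : ℕ → ℚ) (ha : ∀ m, a m = sC m + 2 ^ m - 1) :
    ((1 : PowerSeries ℚ) - X)^4 * (1 - 2*X) * (1 - 4*X + 2*X^2) * PowerSeries.mk a =
      1 - 9*X + 32*X^2 - 58*X^3 + 58*X^4 - 33*X^5 + 8*X^6 := by
  set I : PowerSeries ℚ := mk fun _ => 1 with hI
  set W : PowerSeries ℚ := mk fun m => 2 ^ m with hW
  set H : PowerSeries ℚ := mk fun m => (HB m).1 with hH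
  set B : PowerSeries ℚ := mk fun m => (HB m).2 with hB
  set T : PowerSeries ℚ := mk sT with hT
  set E : PowerSeries ℚ := mk sE with hE
  set D : PowerSeries ℚ := mk sD with hD
  set C' : PowerSeries ℚ := mk sC with hC
  have two : (2 : PowerSeries ℚ) = PowerSeries.C 2 := (map_ofNat (PowerSeries.C (R := ℚ)) 2).symm
  have iI : I = 1 + X * I := by
    ext m; cases m <;> simp [hI, coeff_succ_X_mul, coeff_one]
  have iW : W = 1 + X * (2 * W) := by
    rw [two]; ext m; cases m <;> simp [hW, coeff_succ_X_mul, coeff_one, pow_succ, mul_comm]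
  have iH : H = X * (I + 2 * H + B) := by
    rw [two]; ext m; cases m <;> simp [hI, hH, hB, coeff_succ_X_mul, HB]
  have iB : B = X * (I + 2 * H + 2 * B) := by
    rw [two]; ext m; cases m <;> simp [hI, hH, hB, coeff_succ_X_mul, HB]
  have iT : T = X * (T + I + 2 * H + B) := by
    rw [two]; ext m; cases m <;> simp [hT, hI, hH, hB, coeff_succ_X_mul, sT]
  have iE : E = X * (E + T + H) := by
    ext m; cases m <;> simp [hT, hE, hH, coeff_succ_X_mul, sE]
  have iD : D = X * (D + E + T) := by
    ext m; cases m <;> simp [hT, hE, hD, coeff_succ_X_mul, sD]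
  have iC : C' = 1 + X * (C' + D - I) := by
    ext m; cases m <;> simp [hC, hI, hD, coeff_succ_X_mul, sC, coeff_one]
  have iF : PowerSeries.mk a = C' + W - I := by
    ext m; simp [hC, hI, hW, ha]
  rw [iF]
  clear_value I W H B T E D C'
  have kI : (1 - X) * I = 1 := by linear_combination iI
  have kW : (1 - 2 * X) * W = 1 := by linear_combination iW
  have kH : (1 - 4*X + 2*X^2) * H = X := by
    linear_combination (1 - 2 * X) * iH + X * iB + X * kI
  have kT : (1 - X) * T = H := by linear_combination iT - iH
  have kE : (1 - X) * E = X * (T + H) := by linear_combination iE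
  have kD : (1 - X) * D = X * (E + T) := by linear_combination iD
  have kC : (1 - X) * C' = 1 + X * (D - I) := by linear_combination iC
  generalize (X : PowerSeries ℚ) = x at *
  have e : ∀ y P Q : PowerSeries ℚ, y = 1 - x → P = 1 - 2 * x → Q = 1 - 4 * x + 2 * x^2 →
      y^4 * P * Q * (C' + W - I) = 1 - 9*x + 32*x^2 - 58*x^3 + 58*x^4 - 33*x^5 + 8*x^6 := by
    intro y P Q hy hP hQ
    rw [← hy] at kI kT kE kD kC
    rw [← hP] at kW
    rw [← hQ] at kH
    have : y^4 * P * Q * (C' + W - I) = P * y^3 * Q - P * x * y^2 * Q - P * y^3 * Q + y^4 * Q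
        + x * (P * x^3 * y + P * x^2 * y + P * x^3) := by
      linear_combination y^3 * Q * P * kC + P * x * y^2 * Q * kD + P * x^2 * y * Q * kE
        + (P * x^2 * y * Q + P * x^3 * Q) * kT + (P * x^3 * y + P * x^2 * y + P * x^3) * kH
        - (P * x * y^2 * Q + P * y^3 * Q) * kI + y^4 * Q * kW
    rw [this, hy, hP, hQ]
    ring
  exact e _ _ _ rfl rfl rfl
end PF

namespace PF

def rel {n : ℕ} (σ : Equiv.Perm (Fin n)) : ℕ → ℕ → Prop := fun p q =>
  ∃ i j : Fin n, i < j ∧ (σ i : ℕ) = p ∧ (σ j : ℕ) = q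

theorem rel_wf {n : ℕ} (σ : Equiv.Perm (Fin n)) : WF n (rel σ) := by
  constructor
  · rintro p q ⟨i, j, -, rfl, rfl⟩; exact ⟨(σ i).2, (σ j).2⟩
  · intro p q hp hq hne
    have hne' : σ.symm ⟨p, hp⟩ ≠ σ.symm ⟨q, hq⟩ := by
      intro h; apply hne; simpa using h
    rcases lt_or_gt_of_ne hne' with h | h
    · left; exact ⟨_, _, h, by simp, by simp⟩
    · right; exact ⟨_, _, h, by simp, by simp⟩

theorem rel_dec (σ : Equiv.Perm (Fin 0)) : Dec 0 (rel σ) :=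
  ⟨rel_wf σ, fun _ _ ⟨i, _⟩ => i.elim0⟩

def insP {n : ℕ} (v : Fin (n+1)) (σ : Equiv.Perm (Fin n)) : Equiv.Perm (Fin (n+1)) :=
  (finSuccEquiv n).trans ((Equiv.optionCongr σ).trans (finSuccEquiv' v).symm)

theorem insP_zero {n : ℕ} (v : Fin (n+1)) (σ : Equiv.Perm (Fin n)) : insP v σ 0 = v := by
  simp [insP]
theorem insP_succ {n : ℕ} (v : Fin (n+1)) (σ : Equiv.Perm (Fin n)) (i : Fin n) :
    insP v σ i.succ = v.succAbove (σ i) := by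
  simp [insP]

theorem val_sA {n : ℕ} (v : Fin (n+1)) (x : Fin n) : ((v.succAbove x : Fin (n+1)) : ℕ) = sh v x := by
  unfold sh
  split_ifs with h
  · rw [Fin.succAbove_of_castSucc_lt _ _ (by simpa [Fin.lt_def] using h)]; rfl
  · rw [Fin.succAbove_of_le_castSucc _ _ (by simpa [Fin.le_def] using h)]; rfl

theorem rel_insP {n : ℕ} (v : Fin (n+1)) (σ : Equiv.Perm (Fin n)) :
    rel (insP v σ) = insR n v (rel σ) := by
  funext p q
  apply propext
  constructor
  · rintro ⟨i, j, hij, rfl, rfl⟩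
    obtain ⟨j, rfl⟩ := Fin.exists_succ_eq.2 (Fin.ne_zero_of_lt hij)
    rw [insP_succ, val_sA]
    rcases Fin.eq_zero_or_eq_succ i with rfl | ⟨i, rfl⟩
    · left; rw [insP_zero]; exact ⟨rfl, _, (σ j).2, rfl⟩
    · right; rw [insP_succ, val_sA]
      exact ⟨_, _, ⟨i, j, Fin.succ_lt_succ_iff.1 hij, rfl, rfl⟩, rfl, rfl⟩
  · rintro (⟨rfl, q', hq, rfl⟩ | ⟨p', q', ⟨i, j, hij, rfl, rfl⟩, rfl, rfl⟩)
    · refine ⟨0, (σ.symm ⟨q', hq⟩).succ, Fin.succ_pos _, by rw [insP_zero], ?_⟩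
      rw [insP_succ, val_sA]; simp
    · refine ⟨i.succ, j.succ, Fin.succ_lt_succ_iff.2 hij, ?_, ?_⟩ <;> rw [insP_succ, val_sA]

theorem insP_bij (n : ℕ) : Function.Bijective (fun x : Fin (n+1) × Equiv.Perm (Fin n) => insP x.1 x.2) := by
  rw [Fintype.bijective_iff_injective_and_card]
  constructor
  · rintro ⟨v, σ⟩ ⟨w, τ⟩ h
    simp only at h
    have h0 : v = w := by rw [← insP_zero v σ, h, insP_zero]
    subst h0
    have : σ = τ := by
      ext i
      have h2 := insP_succ v σ i
      rw [h, insP_succ] at h2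
      rw [Fin.succAbove_right_injective h2]
    rw [this]
  · simp [Fintype.card_perm, Nat.factorial_succ]

def chain {n : ℕ} (π : Equiv.Perm (Fin n)) (P : ℕ → ℕ → ℕ → ℕ → Prop) : Prop :=
  ∃ a b c d, rel π a b ∧ rel π b c ∧ rel π c d ∧ P a b c d

theorem chain_iff {n : ℕ} (π : Equiv.Perm (Fin n)) (P) :
    chain π P ↔ ∃ f : Fin 4 ↪o Fin n, P (π (f 0)) (π (f 1)) (π (f 2)) (π (f 3)) := by
  constructor
  · rintro ⟨_, _, _, _, ⟨i, j, h1, rfl, rfl⟩, ⟨j', k, h2, e2, rfl⟩, ⟨k', l, h3, e3, rfl⟩, hP⟩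
    have : j' = j := π.injective (Fin.ext e2)
    subst this
    have : k' = k := π.injective (Fin.ext e3)
    subst this
    refine ⟨OrderEmbedding.ofStrictMono ![i, j', k', l] ?_, hP⟩
    rw [Fin.strictMono_iff_lt_succ]
    intro x; fin_cases x <;> simpa
  · rintro ⟨f, hP⟩
    refine ⟨_, _, _, _, ⟨f 0, f 1, ?_, rfl, rfl⟩, ⟨f 1, f 2, ?_, rfl, rfl⟩, ⟨f 2, f 3, ?_, rfl, rfl⟩, hP⟩ <;>
    · rw [f.lt_iff_lt]; decide

theorem cp1 {n : ℕ} (π : Equiv.Perm (Fin n)) : ContainsPattern π ![0,2,3,1] ↔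
    chain π (fun a b c d => a < d ∧ d < b ∧ b < c) := by
  rw [chain_iff]
  apply exists_congr; intro f
  constructor
  · intro h
    exact ⟨(h 0 3).1 (by decide), (h 3 1).1 (by decide), (h 1 2).1 (by decide)⟩
  · rintro ⟨h1, h2, h3⟩ a b
    fin_cases a <;> fin_cases b <;> simp <;> omega

theorem cp2 {n : ℕ} (π : Equiv.Perm (Fin n)) : ContainsPattern π ![2,0,1,3] ↔
    chain π (fun a b c d => b < c ∧ c < a ∧ a < d) := by
  rw [chain_iff]
  apply exists_congr; intro f
  constructor
  · intro h
    exact ⟨(h 1 2).1 (by decide), (h 2 0).1 (by decide), (h 0 3).1 (by decide)⟩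
  · rintro ⟨h1, h2, h3⟩ a b
    fin_cases a <;> fin_cases b <;> simp <;> omega

theorem cp3 {n : ℕ} (π : Equiv.Perm (Fin n)) : ContainsPattern π ![2,3,0,1] ↔
    chain π (fun a b c d => c < d ∧ d < a ∧ a < b) := by
  rw [chain_iff]
  apply exists_congr; intro f
  constructor
  · intro h
    exact ⟨(h 2 3).1 (by decide), (h 3 0).1 (by decide), (h 0 1).1 (by decide)⟩
  · rintro ⟨h1, h2, h3⟩ a b
    fin_cases a <;> fin_cases b <;> simp <;> omega

theorem av_iff {n : ℕ} (π : Equiv.Perm (Fin n)) :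
    (∀ σ ∈ ({![0,2,3,1], ![2,0,1,3], ![2,3,0,1]} : Set (Fin 4 → Fin 4)), ¬ ContainsPattern π σ) ↔
      Av (rel π) := by
  simp only [Set.mem_insert_iff, Set.mem_singleton_iff, forall_eq_or_imp, forall_eq, cp1, cp2, cp3]
  constructor
  · rintro ⟨h1, h2, h3⟩
    exact ⟨fun a b c d r1 r2 r3 i1 i2 i3 => h1 ⟨a, b, c, d, r1, r2, r3, i1, i2, i3⟩,
      fun a b c d r1 r2 r3 i1 i2 i3 => h2 ⟨a, b, c, d, r1, r2, r3, i1, i2, i3⟩,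
      fun a b c d r1 r2 r3 i1 i2 i3 => h3 ⟨a, b, c, d, r1, r2, r3, i1, i2, i3⟩⟩
  · rintro ⟨h1, h2, h3⟩
    exact ⟨fun ⟨a, b, c, d, r1, r2, r3, i1, i2, i3⟩ => h1 a b c d r1 r2 r3 i1 i2 i3,
      fun ⟨a, b, c, d, r1, r2, r3, i1, i2, i3⟩ => h2 a b c d r1 r2 r3 i1 i2 i3,
      fun ⟨a, b, c, d, r1, r2, r3, i1, i2, i3⟩ => h3 a b c d r1 r2 r3 i1 i2 i3⟩

open Classical in
theorem count_eq (m : ℕ) : ∀ n N, N = n + m →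
    (avoiderCount ({![0,2,3,1], ![2,0,1,3], ![2,3,0,1]} : Set (Fin 4 → Fin 4)) N : ℚ) =
      ∑ σ : Equiv.Perm (Fin n), if Av (rel σ) then Cnt m n (rel σ) else 0 := by
  induction m with
  | zero =>
    rintro n N rfl
    unfold avoiderCount
    simp only [av_iff, Cnt, Nat.card_eq_fintype_card, Fintype.card_subtype, Finset.sum_boole]
  | succ m ih =>
    intro n N hN
    rw [ih (n+1) N (by omega), ← (insP_bij n).sum_comp, Fintype.sum_prod_type_right]
    apply Finset.sum_congr rfl
    intro σ _
    simp only [rel_insP, Av_ins (rel_wf σ)]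
    by_cases h : Av (rel σ)
    · simp only [h, true_and, if_true, Cnt]
      rw [Finset.sum_range]
    · simp [h]

theorem count_final (m : ℕ) :
    (avoiderCount ({![0,2,3,1], ![2,0,1,3], ![2,3,0,1]} : Set (Fin 4 → Fin 4)) m : ℚ) =
      sC m + 2 ^ m - 1 := by
  rw [count_eq m 0 m (by omega), Fintype.sum_unique, if_pos, cnt_zero _ _ (rel_dec _)]
  exact ⟨fun _ _ _ _ ⟨i, _⟩ => i.elim0, fun _ _ _ _ ⟨i, _⟩ => i.elim0, fun _ _ _ _ ⟨i, _⟩ => i.elim0⟩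

end PF

theorem statement_5 :
    ((1 : PowerSeries ℚ) - X)^4 * (1 - 2*X) * (1 - 4*X + 2*X^2) * avoiderGF ({![0,2,3,1], ![2,0,1,3], ![2,3,0,1]} : Set (Fin 4 → Fin 4)) =
      1 - 9*X + 32*X^2 - 58*X^3 + 58*X^4 - 33*X^5 + 8*X^6 := by
  exact PF.gf _ PF.count_final
end
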